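/- Let Ω ⊂ ℝⁿ be a bounded open set with finite perimeter, let u be a non-negative function in BV₀(Ω) with distribution function μ(t) = |{u > t}|, define G(s) := |D(u − u*(s))₊|(ℝⁿ) and let σ be the positive measure on [0,∞) with G(s) = σ((0,s]). Define H(τ) := ∫_τ^{∞} n ω_n^{1/n} μ(ξ)^{1−1/n} dξ. Then for every Borel set A ⊆ [0,∞), σ(A) ≥ D[H(u*)](A), where D[H(u*)] is the distributional derivative (as a measure) of the composition H ∘ u*. -/

import Mathlib

open MeasureTheory Filter Set Metric
open scoped ENNReal NNReal RealInnerProductSpace Topology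

noncomputable section

def diverg {n : ℕ} (φ : EuclideanSpace ℝ (Fin n) → EuclideanSpace ℝ (Fin n))
    (x : EuclideanSpace ℝ (Fin n)) : ℝ :=
  ∑ i, fderiv ℝ φ x (EuclideanSpace.single i (1:ℝ)) i

def varSet {n : ℕ} (w : EuclideanSpace ℝ (Fin n) → ℝ) : Set ℝ :=
  {p | ∃ φ : EuclideanSpace ℝ (Fin n) → EuclideanSpace ℝ (Fin n),
      ContDiff ℝ 1 φ ∧ HasCompactSupport φ ∧ (∀ x, ‖φ x‖ ≤ 1) ∧
      p = ∫ x, w x * diverg φ x}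

def totalVar {n : ℕ} (w : EuclideanSpace ℝ (Fin n) → ℝ) : ℝ := sSup (varSet w)

def IsBV {n : ℕ} (w : EuclideanSpace ℝ (Fin n) → ℝ) : Prop :=
  Integrable w ∧ BddAbove (varSet w)

def perim {n : ℕ} (E : Set (EuclideanSpace ℝ (Fin n))) : ℝ :=
  totalVar (E.indicator fun _ => (1 : ℝ))

def HasFinPerim {n : ℕ} (E : Set (EuclideanSpace ℝ (Fin n))) : Prop :=
  IsBV (E.indicator fun _ => (1 : ℝ))

def omegaN (n : ℕ) : ℝ := (volume (ball (0 : EuclideanSpace ℝ (Fin n)) 1)).toReal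

def decRearr {α : Type*} [MeasurableSpace α] (μ : Measure α) (g : α → ℝ) (s : ℝ) : ℝ :=
  sInf {t : ℝ | 0 < t ∧ μ {x | t < |g x|} ≤ ENNReal.ofReal s}

/-!
Brunn–Minkowski, obtained here from the Prékopa–Leindler inequality, says that the open
`r`-neighbourhood of a set of measure `m` gains at least `r n ωₙ^{1/n} m^{1-1/n}` in measure as
`r → 0`. Applied to the superlevel sets of a non-negative compactly supported `C¹` function `v`, the
layer-cake formula turns this into `∫_0^∞ n ωₙ^{1/n} |{v > ξ}|^{1-1/n} dξ ≤ ∫ |∇v|`.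

If `F' ∈ [0, 1]`, then `|∇(F ∘ v)| + |∇(v - F ∘ v)| = |∇v|`. With `v` a mollification of `w` and `F`
a smooth truncation converging to `(· - c)₊`, the inequality for `v - F ∘ v` and lower
semicontinuity give `|D(w - c)₊| + ∫_0^c n ωₙ^{1/n} |{w > ξ}|^{1-1/n} dξ ≤ |Dw|`. For
`w = (u - u*(b))₊` and `c = u*(a) - u*(b)` this is `D[H(u*)]((a, b]) ≤ σ((a, b])`.
-/

open scoped Pointwise

section PrekopaLeindler

lemma volume_add_volume_le_volume_add_of_isCompact {K L : Set ℝ} (hK : IsCompact K)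
    (hL : IsCompact L) (hK₀ : K.Nonempty) (hL₀ : L.Nonempty) :
    volume K + volume L ≤ volume (K + L) := by
  obtain ⟨p, hpK, hp⟩ := hK.exists_isGreatest hK₀
  obtain ⟨q, hqL, hq⟩ := hL.exists_isLeast hL₀
  -- the translates `K + min L` and `max K + L` meet only in `max K + min L`
  have overlap : AEDisjoint volume (K + {q}) ({p} + L) := by
    refine measure_mono_null (t := {p + q}) ?_ (by simp)
    rintro x ⟨⟨a, ha, _, rfl, rfl⟩, ⟨_, rfl, b, hb, hab⟩⟩
    have := hp ha
    have := hq hb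
    simp only [mem_singleton_iff] at hab ⊢
    linarith
  calc volume K + volume L = volume (K + {q}) + volume ({p} + L) := by
        simp [measure_preimage_add_right, measure_preimage_add]
    _ = volume ((K + {q}) ∪ ({p} + L)) :=
        (measure_union₀ (isCompact_singleton.add hL).measurableSet.nullMeasurableSet overlap).symm
    _ ≤ volume (K + L) := measure_mono <| union_subset
        (add_subset_add_left (singleton_subset_iff.2 hqL))
        (add_subset_add_right (singleton_subset_iff.2 hpK))

theorem volume_add_volume_le_volume_add {A B : Set ℝ} (hA : MeasurableSet A)
    (hB : MeasurableSet B) (hA₀ : A.Nonempty) (hB₀ : B.Nonempty) :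
    volume A + volume B ≤ volume (A + B) := by
  obtain ⟨a, ha⟩ := hA₀
  obtain ⟨b, hb⟩ := hB₀
  rw [hA.measure_eq_iSup_isCompact, hB.measure_eq_iSup_isCompact]
  simp only [iSup_and']
  refine ENNReal.biSup_add_biSup_le' ⟨∅, empty_subset A, isCompact_empty⟩
    ⟨∅, empty_subset B, isCompact_empty⟩ fun K ⟨hKA, hK⟩ L ⟨hLB, hL⟩ => ?_
  calc volume K + volume L ≤ volume (insert a K) + volume (insert b L) :=
        add_le_add (measure_mono (subset_insert a K)) (measure_mono (subset_insert b L))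
    _ ≤ volume (insert a K + insert b L) :=
        volume_add_volume_le_volume_add_of_isCompact (hK.insert a) (hL.insert b)
          (insert_nonempty a K) (insert_nonempty b L)
    _ ≤ volume (A + B) := measure_mono <|
        add_subset_add (insert_subset ha hKA) (insert_subset hb hLB)

lemma ennreal_geom_mean_le_arith_mean {l : ℝ} (hl : l ∈ Ioo 0 1) (a b : ℝ≥0∞) :
    a ^ (1 - l) * b ^ l ≤ ENNReal.ofReal (1 - l) * a + ENNReal.ofReal l * b := by
  obtain ⟨h0, h1⟩ := hl
  have hl : 0 < 1 - l := sub_pos.2 h1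
  rcases eq_or_ne a ∞ with rfl | ha
  · simp [ENNReal.mul_top, h1]
  rcases eq_or_ne b ∞ with rfl | hb
  · simp [ENNReal.mul_top, h0]
  lift a to ℝ≥0 using ha
  lift b to ℝ≥0 using hb
  have := NNReal.geom_mean_le_arith_mean2_weighted ⟨1 - l, hl.le⟩ ⟨l, h0.le⟩ a b
    (NNReal.eq (sub_add_cancel 1 l))
  rw [← ENNReal.coe_rpow_of_nonneg _ hl.le, ← ENNReal.coe_rpow_of_nonneg _ h0.le,
    ENNReal.ofReal_eq_coe_nnreal hl.le, ENNReal.ofReal_eq_coe_nnreal h0.le]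
  exact_mod_cast this

lemma measurable_measure_lt {α β : Type*} [MeasurableSpace α] [LinearOrder β] [TopologicalSpace β]
    [OrderClosedTopology β] [MeasurableSpace β] [BorelSpace β] (μ : Measure α) (f : α → β) :
    Measurable fun t => μ {x | t < f x} :=
  Antitone.measurable fun _ _ hst => measure_mono fun _ hx => hst.trans_lt hx

lemma lintegral_eq_mul_lintegral_measure_lt {α : Type*} [MeasurableSpace α] {μ : Measure α}
    {f : α → ℝ≥0∞} (hf : Measurable f) {M : ℝ≥0∞} (hM₀ : M ≠ 0) (hM : M ≠ ∞)
    (hfM : ∀ x, f x ≤ M) :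
    ∫⁻ x, f x ∂μ = M * ∫⁻ t in Ioo (0 : ℝ) 1, μ {x | ENNReal.ofReal t * M < f x} := by
  have div_le_one (x) : f x / M ≤ 1 := ENNReal.div_le_of_le_mul (by simpa using hfM x)
  have div_ne_top (x) : f x / M ≠ ∞ := ((div_le_one x).trans_lt ENNReal.one_lt_top).ne
  have level_set {t : ℝ} (ht : 0 ≤ t) :
      {x | t < (f x / M).toReal} = {x | ENNReal.ofReal t * M < f x} := by
    ext x
    simp only [mem_ofPred_eq, ← ENNReal.ofReal_lt_iff_lt_toReal ht (div_ne_top x),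
      ENNReal.lt_div_iff_mul_lt (.inl hM₀) (.inl hM)]
  have level_set_empty {t : ℝ} (ht : 1 ≤ t) : μ {x | ENNReal.ofReal t * M < f x} = 0 := by
    convert measure_empty (μ := μ)
    refine eq_empty_of_forall_notMem fun x hx => hx.not_ge ((hfM x).trans ?_)
    exact le_mul_of_one_le_left' (ENNReal.one_le_ofReal.2 ht)
  calc ∫⁻ x, f x ∂μ = ∫⁻ x, M * ENNReal.ofReal (f x / M).toReal ∂μ := by
        simp only [ENNReal.ofReal_toReal (div_ne_top _), ENNReal.mul_div_cancel hM₀ hM]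
    _ = M * ∫⁻ t in Ioi (0 : ℝ), μ {x | ENNReal.ofReal t * M < f x} := by
        rw [lintegral_const_mul _ (hf.div_const M).ennreal_toReal.ennreal_ofReal,
          lintegral_eq_lintegral_meas_lt μ (.of_forall fun _ => ENNReal.toReal_nonneg)
            (hf.div_const M).ennreal_toReal.aemeasurable,
          setLIntegral_congr_fun measurableSet_Ioi fun t ht => congrArg μ (level_set (le_of_lt ht))]
    _ = M * ∫⁻ t in Ioo (0 : ℝ) 1, μ {x | ENNReal.ofReal t * M < f x} := by
        rw [← Ioo_union_Ici_eq_Ioi zero_lt_one, lintegral_union measurableSet_Ici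
          (disjoint_left.2 fun _ hx hx' => hx.2.not_ge hx'),
          setLIntegral_eq_zero measurableSet_Ici fun t ht => level_set_empty ht, add_zero]

/-- The Prékopa–Leindler inequality for the measure `μ`. Stated as a property of `μ`, it passes to
products and to images under linear maps, which reduces `ℝⁿ` to the line. -/
def PrekopaLeindler {E : Type*} [AddCommGroup E] [Module ℝ E] [MeasurableSpace E]
    (μ : Measure E) : Prop :=
  ∀ ⦃l : ℝ⦄, l ∈ Ioo 0 1 → ∀ ⦃f g h : E → ℝ≥0∞⦄, Measurable f → Measurable g → Measurable h →
    (∀ x y, f x ^ (1 - l) * g y ^ l ≤ h ((1 - l) • x + l • y)) →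
    (∫⁻ x, f x ∂μ) ^ (1 - l) * (∫⁻ x, g x ∂μ) ^ l ≤ ∫⁻ x, h x ∂μ

lemma volume_lt_add_volume_lt_le {l : ℝ} (hl : l ∈ Ioo 0 1) {f g h : ℝ → ℝ≥0∞}
    (hf : Measurable f) (hg : Measurable g)
    (hfgh : ∀ x y, f x ^ (1 - l) * g y ^ l ≤ h ((1 - l) • x + l • y)) {a b : ℝ≥0∞}
    (ha : a < ⨆ x, f x) (hb : b < ⨆ x, g x) :
    ENNReal.ofReal (1 - l) * volume {x | a < f x} + ENNReal.ofReal l * volume {x | b < g x}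
      ≤ volume {x | a ^ (1 - l) * b ^ l < h x} := by
  have hl' : 0 < 1 - l := sub_pos.2 hl.2
  have volume_smul {c : ℝ} (hc : 0 < c) (S : Set ℝ) :
      ENNReal.ofReal c * volume S = volume (c • S) := by
    simp [Measure.addHaar_smul, abs_of_pos hc]
  rw [volume_smul hl', volume_smul hl.1]
  refine (volume_add_volume_le_volume_add ((hf measurableSet_Ioi).const_smul₀ _)
    ((hg measurableSet_Ioi).const_smul₀ _) (Nonempty.smul_set (lt_iSup_iff.1 ha))
    (Nonempty.smul_set (lt_iSup_iff.1 hb))).trans (measure_mono ?_)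
  rintro _ ⟨_, ⟨x, hx, rfl⟩, _, ⟨y, hy, rfl⟩, rfl⟩
  exact (ENNReal.mul_lt_mul (ENNReal.rpow_lt_rpow hx hl') (ENNReal.rpow_lt_rpow hy hl.1)).trans_le
    (hfgh x y)

lemma volume_superlevel_add_le {l : ℝ} (hl : l ∈ Ioo 0 1) {f g h : ℝ → ℝ≥0∞}
    (hf : Measurable f) (hg : Measurable g)
    (hfgh : ∀ x y, f x ^ (1 - l) * g y ^ l ≤ h ((1 - l) • x + l • y))
    (hf₀ : ⨆ x, f x ≠ 0) (hf_top : ⨆ x, f x ≠ ∞) (hg₀ : ⨆ x, g x ≠ 0) (hg_top : ⨆ x, g x ≠ ∞)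
    {t : ℝ} (ht : t ∈ Ioo 0 1) :
    ENNReal.ofReal (1 - l) * volume {x | ENNReal.ofReal t * (⨆ x, f x) < f x}
        + ENNReal.ofReal l * volume {x | ENNReal.ofReal t * (⨆ x, g x) < g x}
      ≤ volume {x | ENNReal.ofReal t * ((⨆ x, f x) ^ (1 - l) * (⨆ x, g x) ^ l)
          < min (h x) ((⨆ x, f x) ^ (1 - l) * (⨆ x, g x) ^ l)} := by
  have hl' : 0 < 1 - l := sub_pos.2 hl.2
  have scale (F K : ℝ≥0∞) : ENNReal.ofReal t * (F ^ (1 - l) * K ^ l)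
      = (ENNReal.ofReal t * F) ^ (1 - l) * (ENNReal.ofReal t * K) ^ l := by
    rw [ENNReal.mul_rpow_of_nonneg _ _ hl'.le, ENNReal.mul_rpow_of_nonneg _ _ hl.1.le,
      mul_mul_mul_comm, ← ENNReal.rpow_add _ _ (by simpa using ht.1) ENNReal.ofReal_ne_top]
    simp
  have below {S : ℝ≥0∞} (hS : S ≠ 0) (hS' : S ≠ ∞) : ENNReal.ofReal t * S < S := by
    simpa using ENNReal.mul_lt_mul_left hS hS' (ENNReal.ofReal_lt_one.2 ht.2)
  refine (volume_lt_add_volume_lt_le hl hf hg hfgh (below hf₀ hf_top)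
    (below hg₀ hg_top)).trans (measure_mono fun x hx => lt_min ((scale _ _).trans_lt hx) ?_)
  exact below (mul_ne_zero (by simp [hf₀, hf_top]) (by simp [hg₀, hg_top]))
    (ENNReal.mul_ne_top (by finiteness) (by finiteness))

lemma prekopaLeindler_of_bounded {l : ℝ} (hl : l ∈ Ioo 0 1) {f g h : ℝ → ℝ≥0∞}
    (hf : Measurable f) (hg : Measurable g) (hh : Measurable h)
    (hfgh : ∀ x y, f x ^ (1 - l) * g y ^ l ≤ h ((1 - l) • x + l • y))
    (hf_top : ⨆ x, f x ≠ ∞) (hg_top : ⨆ x, g x ≠ ∞) :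
    (∫⁻ x, f x) ^ (1 - l) * (∫⁻ x, g x) ^ l ≤ ∫⁻ x, h x := by
  have hl' : 0 < 1 - l := sub_pos.2 hl.2
  set F := ⨆ x, f x
  set K := ⨆ x, g x
  rcases eq_or_ne F 0 with hF | hF
  · simp [ENNReal.iSup_eq_zero.1 hF, hl']
  rcases eq_or_ne K 0 with hK | hK
  · simp [ENNReal.iSup_eq_zero.1 hK, hl.1]
  set P := F ^ (1 - l) * K ^ l
  have hP₀ : P ≠ 0 := mul_ne_zero (by simp [hF, hf_top]) (by simp [hK, hg_top])
  have hP_top : P ≠ ∞ := ENNReal.mul_ne_top (by finiteness) (by finiteness)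
  have level_measurable (k : ℝ → ℝ≥0∞) (M : ℝ≥0∞) :
      Measurable fun t => volume {x | ENNReal.ofReal t * M < k x} :=
    (measurable_measure_lt volume k).comp (ENNReal.measurable_ofReal.mul_const M)
  calc (∫⁻ x, f x) ^ (1 - l) * (∫⁻ x, g x) ^ l
      = P * ((∫⁻ t in Ioo (0 : ℝ) 1, volume {x | ENNReal.ofReal t * F < f x}) ^ (1 - l)
        * (∫⁻ t in Ioo (0 : ℝ) 1, volume {x | ENNReal.ofReal t * K < g x}) ^ l) := by
        rw [lintegral_eq_mul_lintegral_measure_lt hf hF hf_top (le_iSup f),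
          lintegral_eq_mul_lintegral_measure_lt hg hK hg_top (le_iSup g),
          ENNReal.mul_rpow_of_nonneg _ _ hl'.le, ENNReal.mul_rpow_of_nonneg _ _ hl.1.le,
          mul_mul_mul_comm]
    _ ≤ P * ∫⁻ t in Ioo (0 : ℝ) 1,
          (ENNReal.ofReal (1 - l) * volume {x | ENNReal.ofReal t * F < f x}
        + ENNReal.ofReal l * volume {x | ENNReal.ofReal t * K < g x}) := by
        rw [lintegral_add_left ((level_measurable f F).const_mul _),
          lintegral_const_mul _ (level_measurable f F),
          lintegral_const_mul _ (level_measurable g K)]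
        exact mul_le_mul_right (ennreal_geom_mean_le_arith_mean hl _ _) P
    _ ≤ P * ∫⁻ t in Ioo (0 : ℝ) 1, volume {x | ENNReal.ofReal t * P < min (h x) P} := by
        refine mul_le_mul_right (setLIntegral_mono (level_measurable _ P) fun t ht => ?_) P
        exact volume_superlevel_add_le hl hf hg hfgh hF hf_top hK hg_top ht
    _ = ∫⁻ x, min (h x) P := (lintegral_eq_mul_lintegral_measure_lt (hh.min measurable_const)
        hP₀ hP_top fun x => min_le_right _ _).symm
    _ ≤ ∫⁻ x, h x := lintegral_mono fun x => min_le_left _ _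

theorem prekopaLeindler_volume_real : PrekopaLeindler (volume : Measure ℝ) := by
  intro l hl f g h hf hg hh hfgh
  have hl' : 0 < 1 - l := sub_pos.2 hl.2
  have truncated (N : ℕ) : (∫⁻ x, min (f x) N) ^ (1 - l) * (∫⁻ x, min (g x) N) ^ l
      ≤ ∫⁻ x, h x := by
    refine prekopaLeindler_of_bounded hl (hf.min measurable_const) (hg.min measurable_const) hh
      (fun x y => le_trans ?_ (hfgh x y)) ?_ ?_
    · exact mul_le_mul' (ENNReal.rpow_le_rpow (min_le_left _ _) hl'.le)
        (ENNReal.rpow_le_rpow (min_le_left _ _) hl.1.le)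
    all_goals exact ((iSup_le fun x => min_le_right _ _).trans_lt (ENNReal.natCast_lt_top N)).ne
  have truncation_tendsto {k : ℝ → ℝ≥0∞} (hk : Measurable k) :
      Tendsto (fun N : ℕ => ∫⁻ x, min (k x) N) atTop (𝓝 (∫⁻ x, k x)) := by
    refine lintegral_tendsto_of_tendsto_of_monotone
      (fun N => (hk.min measurable_const).aemeasurable)
      (.of_forall fun x M N hMN => min_le_min_left _ (Nat.cast_le.2 hMN)) (.of_forall fun x => ?_)
    simpa using (tendsto_const_nhds (x := k x)).min ENNReal.tendsto_nat_nhds_top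
  rcases eq_or_ne (∫⁻ x, f x) 0 with hf₀ | hf₀
  · simp [hf₀, hl']
  rcases eq_or_ne (∫⁻ x, g x) 0 with hg₀ | hg₀
  · simp [hg₀, hl.1]
  refine le_of_tendsto' (ENNReal.Tendsto.mul
    ((ENNReal.continuous_rpow_const.tendsto _).comp (truncation_tendsto hf)) (.inl ?_)
    ((ENNReal.continuous_rpow_const.tendsto _).comp (truncation_tendsto hg)) (.inl ?_)) truncated
  · simp [hf₀, hl'.not_gt]
  · simp [hg₀, hl.1.not_gt]

namespace PrekopaLeindler

variable {E F : Type*} [AddCommGroup E] [Module ℝ E] [MeasurableSpace E]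
  [AddCommGroup F] [Module ℝ F] [MeasurableSpace F] {μ : Measure E} {ν : Measure F}

theorem prod [SFinite ν] (hμ : PrekopaLeindler μ) (hν : PrekopaLeindler ν) :
    PrekopaLeindler (μ.prod ν) := by
  intro l hl f g h hf hg hh hfgh
  rw [lintegral_prod _ hf.aemeasurable, lintegral_prod _ hg.aemeasurable,
    lintegral_prod _ hh.aemeasurable]
  exact hμ hl hf.lintegral_prod_right' hg.lintegral_prod_right' hh.lintegral_prod_right' fun x y =>
    hν hl (by fun_prop) (by fun_prop) (by fun_prop) fun a b => hfgh (x, a) (y, b)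

theorem map (hμ : PrekopaLeindler μ) (φ : E →ₗ[ℝ] F) (hφ : Measurable φ) :
    PrekopaLeindler (μ.map φ) := by
  intro l hl f g h hf hg hh hfgh
  rw [lintegral_map hf hφ, lintegral_map hg hφ, lintegral_map hh hφ]
  exact hμ hl (hf.comp hφ) (hg.comp hφ) (hh.comp hφ) fun x y => by
    simpa using hfgh (φ x) (φ y)

theorem dirac_zero : PrekopaLeindler (Measure.dirac (0 : E)) := by
  intro l _ f g h hf hg hh hfgh
  simpa [lintegral_dirac' _ hf, lintegral_dirac' _ hg, lintegral_dirac' _ hh] using hfgh 0 0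

theorem measure_rpow_mul_measure_rpow_le (hμ : PrekopaLeindler μ) {l : ℝ} (hl : l ∈ Ioo 0 1)
    {A B : Set E} (hA : MeasurableSet A) (hB : MeasurableSet B) :
    μ A ^ (1 - l) * μ B ^ l ≤ μ ((1 - l) • A + l • B) := by
  classical
  set C := toMeasurable μ ((1 - l) • A + l • B) with hC_def
  have hC : MeasurableSet C := measurableSet_toMeasurable _ _
  have := hμ hl (measurable_one.indicator hA) (measurable_one.indicator hB)
    (measurable_one.indicator hC) (f := A.indicator 1) (g := B.indicator 1) fun x y => ?_
  · simpa [lintegral_indicator_one, hA, hB, hC, hC_def, measure_toMeasurable] using this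
  · by_cases hx : x ∈ A
    · by_cases hy : y ∈ B
      · have : (1 - l) • x + l • y ∈ C := subset_toMeasurable _ _ <|
          add_mem_add (smul_mem_smul_set hx) (smul_mem_smul_set hy)
        simp [hx, hy, this]
      · simp [hy, hl.1]
    · simp [hx, hl.2]

end PrekopaLeindler

theorem prekopaLeindler_volume_pi (n : ℕ) :
    PrekopaLeindler (volume : Measure (Fin n → ℝ)) := by
  induction n with
  | zero =>
    rw [volume_pi, Measure.pi_of_empty _ 0]
    exact .dirac_zero
  | succ n ih =>
    let φ : ℝ × (Fin n → ℝ) →ₗ[ℝ] (Fin (n + 1) → ℝ) :=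
      (Fin.consLinearEquiv ℝ (fun _ => ℝ)).toLinearMap
    have hφ : MeasurePreserving φ := by
      convert (volume_preserving_piFinSuccAbove (fun _ : Fin (n + 1) => ℝ) 0).symm
      ext x : 1
      exact (DFunLike.congr_fun (Fin.insertNthEquiv_zero fun _ : Fin (n + 1) => ℝ) x).symm
    exact hφ.map_eq ▸ (prekopaLeindler_volume_real.prod ih).map φ hφ.measurable

theorem prekopaLeindler_volume_euclideanSpace (n : ℕ) :
    PrekopaLeindler (volume : Measure (EuclideanSpace ℝ (Fin n))) := by
  have hφ := PiLp.volume_preserving_toLp (Fin n)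
  exact hφ.map_eq ▸ (prekopaLeindler_volume_pi n).map
    (WithLp.linearEquiv 2 ℝ (Fin n → ℝ)).symm.toLinearMap hφ.measurable

end PrekopaLeindler

lemma measure_le_liminf_of_ae {α : Type*} [MeasurableSpace α] {μ : Measure α} {s : Set α}
    {t : ℕ → Set α} (ht : ∀ k, MeasurableSet (t k))
    (h : ∀ᵐ x ∂μ, x ∈ s → ∀ᶠ k in atTop, x ∈ t k) : μ s ≤ liminf (fun k => μ (t k)) atTop := by
  have indicator_le (x) : (liminf t atTop).indicator 1 x
      ≤ liminf (fun k => (t k).indicator (1 : α → ℝ≥0∞) x) atTop := by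
    by_cases hx : x ∈ liminf t atTop
    · rw [indicator_of_mem hx]
      refine le_liminf_of_le (by isBoundedDefault) ?_
      filter_upwards [mem_liminf_iff_eventually_mem.1 hx] with k hk
      rw [indicator_of_mem hk]
    · simp [hx]
  calc μ s ≤ μ (liminf t atTop) := measure_mono_ae <| h.mono fun x hx hxs =>
        mem_liminf_iff_eventually_mem.2 (hx hxs)
    _ = ∫⁻ x, (liminf t atTop).indicator 1 x ∂μ :=
        (lintegral_indicator_one (.measurableSet_liminf ht)).symm
    _ ≤ ∫⁻ x, liminf (fun k => (t k).indicator (1 : α → ℝ≥0∞) x) atTop ∂μ :=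
        lintegral_mono indicator_le
    _ ≤ liminf (fun k => ∫⁻ x, (t k).indicator (1 : α → ℝ≥0∞) x ∂μ) atTop :=
        lintegral_liminf_le fun k => measurable_one.indicator (ht k)
    _ = liminf (fun k => μ (t k)) atTop := by simp only [lintegral_indicator_one (ht _)]

section Isoperimetric

open Module

variable {E : Type*} [NormedAddCommGroup E] [NormedSpace ℝ E]

lemma exists_le_add_mul_norm_fderiv_add {v : E → ℝ} (hv : ContDiff ℝ 1 v)
    (hv_supp : HasCompactSupport v) {δ : ℝ} (hδ : 0 < δ) :
    ∃ r ∈ Ioc 0 1, ∀ x y, dist y x < r → v y ≤ v x + r * (‖fderiv ℝ v x‖ + δ) := by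
  obtain ⟨η, hη, hη_lt⟩ := Metric.uniformContinuous_iff.1
    ((hv_supp.fderiv ℝ).uniformContinuous_of_continuous (hv.continuous_fderiv one_ne_zero)) δ hδ
  have hr : 0 < min η 1 := lt_min hη one_pos
  refine ⟨min η 1, ⟨hr, min_le_right _ _⟩, fun x y hxy => ?_⟩
  have fderiv_le (z) (hz : z ∈ ball x (min η 1)) : ‖fderiv ℝ v z‖ ≤ ‖fderiv ℝ v x‖ + δ := by
    have := hη_lt (lt_of_lt_of_le hz (min_le_left _ _))
    rw [dist_eq_norm] at this
    linarith [norm_sub_norm_le (fderiv ℝ v z) (fderiv ℝ v x)]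
  have mean_value : v y - v x ≤ (‖fderiv ℝ v x‖ + δ) * ‖y - x‖ :=
    (le_abs_self _).trans <| (convex_ball x _).norm_image_sub_le_of_norm_fderiv_le
      (fun z _ => hv.differentiable one_ne_zero z) fderiv_le (mem_ball_self hr) hxy
  have : (‖fderiv ℝ v x‖ + δ) * ‖y - x‖ ≤ (‖fderiv ℝ v x‖ + δ) * min η 1 :=
    mul_le_mul_of_nonneg_left (dist_eq_norm y x ▸ hxy.le) (by positivity)
  linarith

variable [MeasurableSpace E]

/-- The perimeter `n ωₙ^{1/n} m^{1-1/n}` of a ball of measure `m`: the lower bound that the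
isoperimetric inequality gives for the perimeter of any set of measure `m`. -/
def ballPerimeter (μ : Measure E) (m : ℝ≥0∞) : ℝ≥0∞ :=
  finrank ℝ E * μ (ball 0 1) ^ (finrank ℝ E : ℝ)⁻¹ * m ^ (1 - (finrank ℝ E : ℝ)⁻¹)

lemma measurable_ballPerimeter_measure_lt (μ : Measure E) {α : Type*} [MeasurableSpace α]
    (ν : Measure α) (f : α → ℝ) :
    Measurable fun t => ballPerimeter μ (ν {x | t < f x}) :=
  ((measurable_measure_lt ν f).pow_const _).const_mul _

lemma ballPerimeter_zero (μ : Measure E) (hn : 1 < finrank ℝ E) : ballPerimeter μ 0 = 0 := by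
  have : (finrank ℝ E : ℝ)⁻¹ < 1 := inv_lt_one_of_one_lt₀ (by exact_mod_cast hn)
  simp [ballPerimeter, this]

lemma monotone_ballPerimeter (μ : Measure E) : Monotone (ballPerimeter μ) := fun _ _ h =>
  mul_le_mul_right (ENNReal.rpow_le_rpow h (sub_nonneg.2 (Nat.cast_inv_le_one _))) _

variable [FiniteDimensional ℝ E]

lemma continuous_ballPerimeter (μ : Measure E) [μ.IsAddHaarMeasure] :
    Continuous (ballPerimeter μ) := by
  refine (ENNReal.continuous_const_mul ?_).comp ENNReal.continuous_rpow_const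
  exact ENNReal.mul_ne_top (by simp) (ENNReal.rpow_ne_top_of_nonneg (by positivity)
    measure_ball_lt_top.ne)

theorem lintegral_ballPerimeter_le_liminf (μ : Measure E) [μ.IsAddHaarMeasure] {α : Type*}
    [MeasurableSpace α] {ν : Measure α} {f : α → ℝ} {F : ℕ → α → ℝ} (hF : ∀ k, Measurable (F k))
    (h_lim : ∀ᵐ x ∂ν, Tendsto (F · x) atTop (𝓝 (f x))) (S : Set ℝ) :
    ∫⁻ ξ in S, ballPerimeter μ (ν {x | ξ < f x})
      ≤ liminf (fun k => ∫⁻ ξ in S, ballPerimeter μ (ν {x | ξ < F k x})) atTop := by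
  refine le_trans (lintegral_mono fun ξ => ?_)
    (lintegral_liminf_le fun k => measurable_ballPerimeter_measure_lt μ ν (F k))
  have measure_le := measure_le_liminf_of_ae (fun k => hF k (measurableSet_Ioi (a := ξ))) <|
    h_lim.mono fun x hx (hxs : ξ < f x) => hx.eventually (lt_mem_nhds hxs)
  refine (monotone_ballPerimeter μ measure_le).trans_eq ?_
  exact (monotone_ballPerimeter μ).map_liminf_of_continuousAt _
    (continuous_ballPerimeter μ).continuousAt

variable [BorelSpace E] {μ : Measure E} [μ.IsAddHaarMeasure]

lemma measure_eq_one_of_rpow_eq [Nontrivial E] {A : Set E} {a : ℝ} (ha₀ : 0 < a)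
    (ha : μ A ^ (finrank ℝ E : ℝ)⁻¹ = ENNReal.ofReal a) : μ (a⁻¹ • A) = 1 := by
  have hn : (finrank ℝ E : ℝ) ≠ 0 := Nat.cast_ne_zero.2 finrank_pos.ne'
  have hA : μ A = ENNReal.ofReal (a ^ finrank ℝ E) := by
    rw [ENNReal.ofReal_pow ha₀.le, ← ha, ← ENNReal.rpow_mul_natCast, inv_mul_cancel₀ hn,
      ENNReal.rpow_one]
  rw [Measure.addHaar_smul, hA, ← ENNReal.ofReal_mul (abs_nonneg _), abs_of_pos (by positivity),
    inv_pow, inv_mul_cancel₀ (by positivity), ENNReal.ofReal_one]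

lemma PrekopaLeindler.ofReal_add_pow_le [Nontrivial E] (hμ : PrekopaLeindler μ) {A B : Set E}
    (hA : MeasurableSet A) (hB : MeasurableSet B) {a b : ℝ} (ha₀ : 0 < a) (hb₀ : 0 < b)
    (ha : μ A ^ (finrank ℝ E : ℝ)⁻¹ = ENNReal.ofReal a)
    (hb : μ B ^ (finrank ℝ E : ℝ)⁻¹ = ENNReal.ofReal b) :
    (ENNReal.ofReal a + ENNReal.ofReal b) ^ finrank ℝ E ≤ μ (A + B) := by
  set l := b / (a + b) with hl
  have hl' : 1 - l = a / (a + b) := by rw [hl]; field_simp; ring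
  have hl_mem : l ∈ Ioo 0 1 :=
    ⟨by positivity, (div_lt_one (by positivity)).2 (lt_add_of_pos_left b ha₀)⟩
  have combination : (1 - l) • a⁻¹ • A + l • b⁻¹ • B = (a + b)⁻¹ • (A + B) := by
    rw [smul_smul, smul_smul, smul_add, hl']
    congr 2 <;> [skip; rw [hl]] <;> field_simp
  have one_le := hμ.measure_rpow_mul_measure_rpow_le hl_mem (hA.const_smul₀ a⁻¹)
    (hB.const_smul₀ b⁻¹)
  rw [measure_eq_one_of_rpow_eq ha₀ ha, measure_eq_one_of_rpow_eq hb₀ hb, combination,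
    Measure.addHaar_smul, abs_of_pos (by positivity), inv_pow,
    ENNReal.ofReal_inv_of_pos (by positivity)] at one_le
  simp only [ENNReal.one_rpow, mul_one] at one_le
  rw [← ENNReal.ofReal_add ha₀.le hb₀.le, ← ENNReal.ofReal_pow (by positivity)]
  simpa using (ENNReal.mul_le_iff_le_inv (by positivity) ENNReal.ofReal_ne_top).2 one_le

theorem PrekopaLeindler.brunnMinkowski [Nontrivial E] (hμ : PrekopaLeindler μ) {A B : Set E}
    (hA : MeasurableSet A) (hB : MeasurableSet B) (hA₀ : A.Nonempty) (hB₀ : B.Nonempty) :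
    (μ A ^ (finrank ℝ E : ℝ)⁻¹ + μ B ^ (finrank ℝ E : ℝ)⁻¹) ^ finrank ℝ E ≤ μ (A + B) := by
  have hn : (finrank ℝ E : ℝ) ≠ 0 := Nat.cast_ne_zero.2 finrank_pos.ne'
  have hn' : 0 < (finrank ℝ E : ℝ)⁻¹ := by positivity
  have rpow_pow (x : ℝ≥0∞) : (x ^ (finrank ℝ E : ℝ)⁻¹) ^ finrank ℝ E = x := by
    rw [← ENNReal.rpow_mul_natCast, inv_mul_cancel₀ hn, ENNReal.rpow_one]
  have le_left : μ A ≤ μ (A + B) := by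
    obtain ⟨b, hb⟩ := hB₀
    simpa [measure_preimage_add_right] using
      measure_mono (μ := μ) (add_subset_add_left (s := A) (singleton_subset_iff.2 hb))
  have le_right : μ B ≤ μ (A + B) := by
    obtain ⟨a, ha⟩ := hA₀
    simpa [measure_preimage_add] using
      measure_mono (μ := μ) (add_subset_add_right (t := B) (singleton_subset_iff.2 ha))
  rcases eq_or_ne (μ A) 0 with hA_zero | hA_zero
  · simpa [hA_zero, hn', rpow_pow] using le_right
  rcases eq_or_ne (μ B) 0 with hB_zero | hB_zero
  · simpa [hB_zero, hn', rpow_pow] using le_left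
  rcases eq_or_ne (μ A) ∞ with hA_top | hA_top
  · simp [top_le_iff.1 (hA_top ▸ le_left)]
  rcases eq_or_ne (μ B) ∞ with hB_top | hB_top
  · simp [top_le_iff.1 (hB_top ▸ le_right)]
  have root_eq {S : Set E} (h₀ : μ S ≠ 0) (h_top : μ S ≠ ∞) :
      ∃ s : ℝ, 0 < s ∧ μ S ^ (finrank ℝ E : ℝ)⁻¹ = ENNReal.ofReal s :=
    have h_top' := ENNReal.rpow_ne_top_of_nonneg hn'.le h_top
    ⟨_, ENNReal.toReal_pos (by simp [h₀, h_top]) h_top', (ENNReal.ofReal_toReal h_top').symm⟩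
  obtain ⟨a, ha₀, ha⟩ := root_eq hA_zero hA_top
  obtain ⟨b, hb₀, hb⟩ := root_eq hB_zero hB_top
  rw [ha, hb]
  exact hμ.ofReal_add_pow_le hA hB ha₀ hb₀ ha hb

theorem PrekopaLeindler.measure_add_mul_ballPerimeter_le_measure_thickening [Nontrivial E]
    (hμ : PrekopaLeindler μ) {A : Set E} (hA : MeasurableSet A) (hA₀ : A.Nonempty) {r : ℝ}
    (hr : 0 < r) :
    μ A + ENNReal.ofReal r * ballPerimeter μ (μ A) ≤ μ (thickening r A) := by
  have hn : (finrank ℝ E : ℝ) ≠ 0 := Nat.cast_ne_zero.2 finrank_pos.ne'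
  have rpow_pow (x : ℝ≥0∞) (m : ℕ) :
      (x ^ (finrank ℝ E : ℝ)⁻¹) ^ m = x ^ ((finrank ℝ E : ℝ)⁻¹ * m) :=
    (ENNReal.rpow_mul_natCast _ _ _).symm
  have ball_root : μ (ball 0 r) ^ (finrank ℝ E : ℝ)⁻¹
      = ENNReal.ofReal r * μ (ball 0 1) ^ (finrank ℝ E : ℝ)⁻¹ := by
    rw [Measure.addHaar_ball_of_pos _ _ hr, ENNReal.mul_rpow_of_nonneg _ _ (by positivity),
      ENNReal.ofReal_pow hr.le, ENNReal.pow_rpow_inv_natCast finrank_pos.ne']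
  set a := μ A ^ (finrank ℝ E : ℝ)⁻¹ with ha
  set b := μ (ball 0 r) ^ (finrank ℝ E : ℝ)⁻¹
  calc μ A + ENNReal.ofReal r * ballPerimeter μ (μ A)
      = a ^ finrank ℝ E + finrank ℝ E * a ^ (finrank ℝ E - 1) * b := by
        rw [ha, rpow_pow, rpow_pow, Nat.cast_pred finrank_pos, mul_sub, inv_mul_cancel₀ hn,
          mul_one, ENNReal.rpow_one, ball_root, ballPerimeter]
        ring
    _ ≤ (a + b) ^ finrank ℝ E := by
        simpa [mul_assoc, mul_comm, mul_left_comm] using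
          pow_add_mul_le_add_pow (zero_le (a := a)) (b := b) (by simp) (finrank ℝ E)
    _ ≤ μ (A + ball 0 r) := hμ.brunnMinkowski hA measurableSet_ball hA₀ (nonempty_ball.2 hr)
    _ = μ (thickening r A) := by rw [add_ball_zero]

lemma PrekopaLeindler.lintegral_add_mul_lintegral_ballPerimeter_le (hμ : PrekopaLeindler μ)
    (hn : 1 < finrank ℝ E) {v W : E → ℝ} (hv : Measurable v) (hW : AEMeasurable W μ)
    (hv₀ : ∀ x, 0 ≤ v x) {r : ℝ} (hr : 0 < r) (hvW : ∀ x y, dist y x < r → v y ≤ W x) :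
    ∫⁻ x, ENNReal.ofReal (v x) ∂μ
        + ENNReal.ofReal r * ∫⁻ ξ in Ioi (0 : ℝ), ballPerimeter μ (μ {x | ξ < v x})
      ≤ ∫⁻ x, ENNReal.ofReal (W x) ∂μ := by
  have : Nontrivial E := nontrivial_of_finrank_pos (zero_lt_one.trans hn)
  have hW₀ (x) : 0 ≤ W x := (hv₀ x).trans (hvW x x (by simpa using hr))
  rw [lintegral_eq_lintegral_meas_lt μ (.of_forall hv₀) hv.aemeasurable,
    lintegral_eq_lintegral_meas_lt μ (.of_forall hW₀) hW,
    ← lintegral_const_mul _ (measurable_ballPerimeter_measure_lt μ μ v),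
    ← lintegral_add_left (measurable_measure_lt μ v)]
  refine lintegral_mono fun ξ => ?_
  rcases {x | ξ < v x}.eq_empty_or_nonempty with h_empty | h_nonempty
  · simp [h_empty, ballPerimeter_zero μ hn]
  refine (hμ.measure_add_mul_ballPerimeter_le_measure_thickening (hv measurableSet_Ioi)
    h_nonempty hr).trans (measure_mono fun x hx => ?_)
  obtain ⟨y, hy, hxy⟩ := mem_thickening_iff.1 hx
  exact hy.trans_le (hvW x y (by rwa [dist_comm]))

lemma PrekopaLeindler.lintegral_ballPerimeter_le_add (hμ : PrekopaLeindler μ)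
    (hn : 1 < finrank ℝ E) {v : E → ℝ} (hv : ContDiff ℝ 1 v) (hv_supp : HasCompactSupport v)
    (hv₀ : ∀ x, 0 ≤ v x) {δ : ℝ} (hδ : 0 < δ) :
    ∫⁻ ξ in Ioi (0 : ℝ), ballPerimeter μ (μ {x | ξ < v x})
      ≤ ∫⁻ x, ‖fderiv ℝ v x‖ₑ ∂μ + ENNReal.ofReal δ * μ (cthickening 1 (tsupport v)) := by
  obtain ⟨r, ⟨hr, hr₁⟩, hvr⟩ := exists_le_add_mul_norm_fderiv_add hv hv_supp hδ
  set K := cthickening 1 (tsupport v)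
  have hK : MeasurableSet K := isClosed_cthickening.measurableSet
  have hv' : Measurable (fderiv ℝ v) := (hv.continuous_fderiv one_ne_zero).measurable
  set p : E → ℝ := K.indicator fun x => ‖fderiv ℝ v x‖ + δ with hp_def
  have hp : Measurable p := (hv'.norm.add_const δ).indicator hK
  have hp₀ (x) : 0 ≤ p x := indicator_nonneg (fun _ _ => by positivity) x
  have le_enlarged (x y) (hxy : dist y x < r) : v y ≤ v x + r * p x := by
    by_cases hx : x ∈ K
    · simpa only [hp_def, indicator_of_mem hx] using hvr x y hxy
    have hy : v y = 0 := image_eq_zero_of_notMem_tsupport fun hy => hx <|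
      mem_cthickening_of_dist_le x y 1 _ hy (by rw [dist_comm]; linarith)
    rw [hy]
    have := hv₀ x
    have := hp₀ x
    positivity
  have enlarged_le : ∫⁻ x, ENNReal.ofReal (v x + r * p x) ∂μ ≤ ∫⁻ x, ENNReal.ofReal (v x) ∂μ
      + ENNReal.ofReal r * (∫⁻ x, ‖fderiv ℝ v x‖ₑ ∂μ + ENNReal.ofReal δ * μ K) := by
    simp only [ENNReal.ofReal_add (hv₀ _) (mul_nonneg hr.le (hp₀ _)), ENNReal.ofReal_mul hr.le]
    rw [lintegral_add_left hv.continuous.measurable.ennreal_ofReal,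
      lintegral_const_mul _ hp.ennreal_ofReal, ← lintegral_indicator_const hK,
      ← lintegral_add_left hv'.enorm]
    gcongr with x
    by_cases hx : x ∈ K
    · simp [hp_def, hx, ENNReal.ofReal_add, hδ.le]
    · simp [hp_def, hx]
  have hv_fin : ∫⁻ x, ENNReal.ofReal (v x) ∂μ ≠ ∞ :=
    ((hv.continuous.integrable_of_hasCompactSupport hv_supp).lintegral_lt_top).ne
  have layer_cake := hμ.lintegral_add_mul_lintegral_ballPerimeter_le hn hv.continuous.measurable
    (hv.continuous.measurable.add (hp.const_mul r)).aemeasurable hv₀ hr le_enlarged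
  exact (ENNReal.mul_le_mul_iff_right (by simpa using hr) ENNReal.ofReal_ne_top).1 <|
    (ENNReal.add_le_add_iff_left hv_fin).1 <| layer_cake.trans enlarged_le

theorem PrekopaLeindler.lintegral_ballPerimeter_le (hμ : PrekopaLeindler μ)
    (hn : 1 < finrank ℝ E) {v : E → ℝ} (hv : ContDiff ℝ 1 v) (hv_supp : HasCompactSupport v)
    (hv₀ : ∀ x, 0 ≤ v x) :
    ∫⁻ ξ in Ioi (0 : ℝ), ballPerimeter μ (μ {x | ξ < v x}) ≤ ∫⁻ x, ‖fderiv ℝ v x‖ₑ ∂μ := by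
  have lim : Tendsto (fun δ : ℝ => ∫⁻ x, ‖fderiv ℝ v x‖ₑ ∂μ
      + ENNReal.ofReal δ * μ (cthickening 1 (tsupport v))) (𝓝[>] 0)
      (𝓝 (∫⁻ x, ‖fderiv ℝ v x‖ₑ ∂μ)) := by
    have := (ENNReal.continuous_ofReal.tendsto 0).mono_left (nhdsWithin_le_nhds (s := Ioi 0))
    simpa using (ENNReal.Tendsto.mul_const this
      (.inr hv_supp.isCompact.cthickening.measure_lt_top.ne)).const_add _
  exact ge_of_tendsto lim <| eventually_nhdsWithin_of_forall fun δ hδ =>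
    hμ.lintegral_ballPerimeter_le_add hn hv hv_supp hv₀ hδ

theorem PrekopaLeindler.lintegral_fderiv_comp_add_lintegral_ballPerimeter_le
    (hμ : PrekopaLeindler μ) (hn : 1 < finrank ℝ E) {v : E → ℝ} (hv : ContDiff ℝ 1 v)
    (hv_supp : HasCompactSupport v) (hv₀ : ∀ x, 0 ≤ v x) {F : ℝ → ℝ} (hF : ContDiff ℝ 1 F)
    (hF_zero : F 0 = 0) (hF' : ∀ t, deriv F t ∈ Icc (0 : ℝ) 1) :
    ∫⁻ x, ‖fderiv ℝ (F ∘ v) x‖ₑ ∂μ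
        + ∫⁻ ξ in Ioi (0 : ℝ), ballPerimeter μ (μ {x | ξ < v x - F (v x)})
      ≤ ∫⁻ x, ‖fderiv ℝ v x‖ₑ ∂μ := by
  have hasDerivAt_F (t) : HasDerivAt F (deriv F t) t :=
    (hF.differentiable one_ne_zero t).hasDerivAt
  have hasFDerivAt_v (x) := (hv.differentiable one_ne_zero x).hasFDerivAt
  have hasFDerivAt_F (x) := (hasDerivAt_F (v x)).comp_hasFDerivAt x (hasFDerivAt_v x)
  have fderiv_sub (x) : fderiv ℝ (v - F ∘ v) x
      = (1 - deriv F (v x)) • fderiv ℝ v x := by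
    rw [((hasFDerivAt_v x).sub (hasFDerivAt_F x)).fderiv, sub_smul, one_smul]
  have monotone_sub : Monotone fun t => t - F t :=
    monotone_of_hasDerivAt_nonneg (fun t => (hasDerivAt_id t).sub (hasDerivAt_F t))
      fun t => sub_nonneg.2 (hF' t).2
  have isoperimetric := hμ.lintegral_ballPerimeter_le hn (v := v - F ∘ v) (hv.sub (hF.comp hv))
    (hv_supp.comp_left (g := fun t => t - F t) (by simp [hF_zero]))
    (fun x => by simpa [hF_zero] using monotone_sub (hv₀ x))
  refine (add_le_add_right isoperimetric _).trans_eq ?_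
  rw [← lintegral_add_left ((hF.comp hv).continuous_fderiv one_ne_zero).measurable.enorm]
  refine lintegral_congr fun x => ?_
  rw [(hasFDerivAt_F x).fderiv, fderiv_sub, enorm_smul, enorm_smul, ← add_mul,
    Real.enorm_of_nonneg (hF' _).1, Real.enorm_of_nonneg (sub_nonneg.2 (hF' _).2),
    ← ENNReal.ofReal_add (hF' _).1 (sub_nonneg.2 (hF' _).2), add_sub_cancel, ENNReal.ofReal_one,
    one_mul]

end Isoperimetric

section Variation

lemma integral_mul_fderiv_eq_neg_of_hasCompactSupport {E : Type*} [NormedAddCommGroup E]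
    [NormedSpace ℝ E] [FiniteDimensional ℝ E] [MeasurableSpace E] [BorelSpace E] {μ : Measure E}
    [μ.IsAddHaarMeasure] {f g : E → ℝ} (hf : ContDiff ℝ 1 f) (hg : ContDiff ℝ 1 g)
    (hg_supp : HasCompactSupport g) (y : E) :
    ∫ x, f x * fderiv ℝ g x y ∂μ = -∫ x, fderiv ℝ f x y * g x ∂μ := by
  have hf' := hf.continuous_fderiv_apply one_ne_zero |>.comp (.prodMk_left y)
  have hg' := hg.continuous_fderiv_apply one_ne_zero |>.comp (.prodMk_left y)
  refine integral_mul_fderiv_eq_neg_fderiv_mul_of_integrable ?_ ?_ ?_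
    (fun x _ => hf.differentiable one_ne_zero x) (fun x _ => hg.differentiable one_ne_zero x)
  · exact (hf'.mul hg.continuous).integrable_of_hasCompactSupport hg_supp.mul_left
  · exact (hf.continuous.mul hg').integrable_of_hasCompactSupport
      (hg_supp.fderiv_apply ℝ y).mul_left
  · exact (hf.continuous.mul hg.continuous).integrable_of_hasCompactSupport hg_supp.mul_left

variable {n : ℕ} {w v : EuclideanSpace ℝ (Fin n) → ℝ}
  {φ : EuclideanSpace ℝ (Fin n) → EuclideanSpace ℝ (Fin n)}

lemma continuous_diverg (hφ : ContDiff ℝ 1 φ) : Continuous (diverg φ) := by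
  unfold diverg
  have := hφ.continuous_fderiv one_ne_zero
  fun_prop

lemma hasCompactSupport_diverg (hφ : HasCompactSupport φ) : HasCompactSupport (diverg φ) :=
  (hφ.fderiv ℝ).comp_left (g := fun L : EuclideanSpace ℝ (Fin n) →L[ℝ] EuclideanSpace ℝ (Fin n) =>
    ∑ i, L (EuclideanSpace.single i 1) i) (by simp)

theorem integral_mul_diverg (hv : ContDiff ℝ 1 v) (hφ : ContDiff ℝ 1 φ)
    (hφ_supp : HasCompactSupport φ) :
    ∫ x, v x * diverg φ x = -∫ x, fderiv ℝ v x (φ x) := by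
  have coord_contDiff (i) : ContDiff ℝ 1 fun x => φ x i := by fun_prop
  have coord_supp (i) : HasCompactSupport fun x => φ x i :=
    hφ_supp.comp_left (g := fun y : EuclideanSpace ℝ (Fin n) => y i) (by simp)
  have fderiv_coord (i x y) : fderiv ℝ (fun x => φ x i) x y = fderiv ℝ φ x y i := by
    have := (EuclideanSpace.proj (𝕜 := ℝ) i).hasFDerivAt.comp x
      (hφ.differentiable one_ne_zero x).hasFDerivAt
    exact DFunLike.congr_fun this.fderiv y
  have := hv.continuous_fderiv one_ne_zero
  have := hφ.continuous_fderiv one_ne_zero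
  calc ∫ x, v x * diverg φ x
      = ∑ i, ∫ x, v x * fderiv ℝ (fun x => φ x i) x (EuclideanSpace.single i 1) := by
        rw [← integral_finsetSum]
        · simp only [diverg, Finset.mul_sum, fderiv_coord]
        · intro i _
          refine Continuous.integrable_of_hasCompactSupport ?_
            ((coord_supp i).fderiv_apply ℝ _).mul_left
          simp only [fderiv_coord]
          fun_prop
    _ = -∑ i, ∫ x, fderiv ℝ v x (EuclideanSpace.single i 1) * φ x i := by
        rw [← Finset.sum_neg_distrib]
        exact Finset.sum_congr rfl fun i _ =>
          integral_mul_fderiv_eq_neg_of_hasCompactSupport hv (coord_contDiff i) (coord_supp i) _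
    _ = -∫ x, fderiv ℝ v x (φ x) := by
        rw [← integral_finsetSum]
        · congr! 3 with x
          conv_rhs => rw [← (EuclideanSpace.basisFun (Fin n) ℝ).sum_repr (φ x)]
          simp [mul_comm]
        · exact fun i _ => Continuous.integrable_of_hasCompactSupport (by fun_prop)
            (coord_supp i).mul_left

/-- The total variation of `w` as a value in `[0, ∞]`, so that no boundedness assumption is needed;
see `ofReal_totalVar` for the relation with `totalVar`. -/
def eVariation (w : EuclideanSpace ℝ (Fin n) → ℝ) : ℝ≥0∞ :=
  ⨆ p ∈ varSet w, ENNReal.ofReal p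

lemma zero_mem_varSet (w : EuclideanSpace ℝ (Fin n) → ℝ) : 0 ∈ varSet w :=
  ⟨0, contDiff_const, .zero, by simp, by simp [diverg]⟩

lemma ofReal_totalVar (hw : BddAbove (varSet w)) :
    ENNReal.ofReal (totalVar w) = eVariation w := by
  rw [totalVar, Monotone.map_csSup_of_continuousAt ENNReal.continuous_ofReal.continuousAt
    (fun _ _ => ENNReal.ofReal_le_ofReal) ⟨0, zero_mem_varSet w⟩ hw, sSup_image, eVariation]

lemma bddAbove_varSet (hw : eVariation w ≠ ∞) : BddAbove (varSet w) :=
  ⟨(eVariation w).toReal, fun p hp =>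
    (ENNReal.ofReal_le_iff_le_toReal hw).1 (le_iSup₂ (f := fun p _ => ENNReal.ofReal p) p hp)⟩

lemma ofReal_integral_mul_diverg_le (hφ : ContDiff ℝ 1 φ) (hφ_supp : HasCompactSupport φ)
    (hφ_le : ∀ x, ‖φ x‖ ≤ 1) : ENNReal.ofReal (∫ x, w x * diverg φ x) ≤ eVariation w :=
  le_iSup₂ (f := fun p (_ : p ∈ varSet w) => ENNReal.ofReal p) _ ⟨φ, hφ, hφ_supp, hφ_le, rfl⟩

lemma eVariation_le {V : ℝ≥0∞} (h : ∀ φ : EuclideanSpace ℝ (Fin n) → EuclideanSpace ℝ (Fin n),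
    ContDiff ℝ 1 φ → HasCompactSupport φ → (∀ x, ‖φ x‖ ≤ 1) →
      ENNReal.ofReal (∫ x, w x * diverg φ x) ≤ V) : eVariation w ≤ V :=
  iSup₂_le fun _ ⟨φ, hφ, hφ_supp, hφ_le, hp⟩ => hp ▸ h φ hφ hφ_supp hφ_le

lemma eVariation_le_lintegral_fderiv (hv : ContDiff ℝ 1 v) :
    eVariation v ≤ ∫⁻ x, ‖fderiv ℝ v x‖ₑ := by
  refine eVariation_le fun φ hφ hφ_supp hφ_le => ?_
  rw [integral_mul_diverg hv hφ hφ_supp]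
  calc ENNReal.ofReal (-∫ x, fderiv ℝ v x (φ x)) ≤ ‖∫ x, fderiv ℝ v x (φ x)‖ₑ := by
        rw [← enorm_neg]
        exact Real.ofReal_le_enorm _
    _ ≤ ∫⁻ x, ‖fderiv ℝ v x (φ x)‖ₑ := enorm_integral_le_lintegral_enorm _
    _ ≤ ∫⁻ x, ‖fderiv ℝ v x‖ₑ := lintegral_mono fun x => enorm_le_iff_norm_le.2 <|
        (fderiv ℝ v x).unit_le_opNorm (φ x) (hφ_le x)

lemma lintegral_sq_norm_fderiv_div_sqrt_le_eVariation (hv : ContDiff ℝ 2 v)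
    (hv_supp : HasCompactSupport v) {ε : ℝ} (hε : 0 < ε) :
    ∫⁻ x, ENNReal.ofReal (‖fderiv ℝ v x‖ ^ 2 / √(‖fderiv ℝ v x‖ ^ 2 + ε ^ 2)) ≤ eVariation v := by
  set p : EuclideanSpace ℝ (Fin n) → EuclideanSpace ℝ (Fin n) := fun x =>
    (InnerProductSpace.toDual ℝ _).symm (fderiv ℝ v x)
  have norm_p (x) : ‖p x‖ = ‖fderiv ℝ v x‖ := LinearIsometryEquiv.norm_map _ _
  have fderiv_p (x) : fderiv ℝ v x (p x) = ‖p x‖ ^ 2 := by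
    rw [← real_inner_self_eq_norm_sq, InnerProductSpace.toDual_symm_apply]
  have p_contDiff : ContDiff ℝ 1 p :=
    (InnerProductSpace.toDual ℝ _).symm.toContinuousLinearEquiv.contDiff.comp
      (hv.fderiv_right (by norm_num))
  have p_supp : HasCompactSupport p :=
    (hv_supp.fderiv ℝ).comp_left (g := (InnerProductSpace.toDual ℝ _).symm) (map_zero _)
  set s := fun x => √(‖p x‖ ^ 2 + ε ^ 2)
  have s_pos (x) : 0 < s x := by positivity
  have s_contDiff : ContDiff ℝ 1 s :=
    ((p_contDiff.norm_sq ℝ).add contDiff_const).sqrt fun x => by positivity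
  set φ := fun x => -((s x)⁻¹ • p x)
  have φ_contDiff : ContDiff ℝ 1 φ := ((s_contDiff.inv fun x => (s_pos x).ne').smul p_contDiff).neg
  have φ_supp : HasCompactSupport φ :=
    p_supp.mono fun x hx hpx => hx (by simp only [φ, hpx, smul_zero, neg_zero])
  have φ_le (x) : ‖φ x‖ ≤ 1 := by
    rw [norm_neg, norm_smul, norm_inv, Real.norm_of_nonneg (s_pos x).le, inv_mul_le_one₀ (s_pos x)]
    exact Real.le_sqrt_of_sq_le (by nlinarith)
  have fderiv_φ (x) :
      -fderiv ℝ v x (φ x) = ‖fderiv ℝ v x‖ ^ 2 / √(‖fderiv ℝ v x‖ ^ 2 + ε ^ 2) := by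
    simp only [φ, s, map_neg, map_smul, smul_eq_mul, fderiv_p, norm_p, neg_neg, inv_mul_eq_div]
  have integrable_φ : Integrable fun x => -fderiv ℝ v x (φ x) :=
    (((hv.continuous_fderiv two_ne_zero).clm_apply
      φ_contDiff.continuous).integrable_of_hasCompactSupport (φ_supp.mono fun x hx hx' =>
        hx (by simp only [hx', map_zero]))).neg
  have h_le := ofReal_integral_mul_diverg_le (w := v) φ_contDiff φ_supp φ_le
  rw [integral_mul_diverg (hv.of_le one_le_two) φ_contDiff φ_supp, ← integral_neg] at h_le
  simp only [fderiv_φ] at integrable_φ h_le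
  rwa [ofReal_integral_eq_lintegral_ofReal integrable_φ
    (.of_forall fun x => div_nonneg (sq_nonneg _) (Real.sqrt_nonneg _))] at h_le

theorem lintegral_fderiv_le_eVariation (hv : ContDiff ℝ 2 v) (hv_supp : HasCompactSupport v) :
    ∫⁻ x, ‖fderiv ℝ v x‖ₑ ≤ eVariation v := by
  have := hv.continuous_fderiv two_ne_zero
  set ε : ℕ → ℝ := fun k => 1 / ((k : ℝ) + 1)
  set f : ℕ → EuclideanSpace ℝ (Fin n) → ℝ≥0∞ := fun k x =>
    ENNReal.ofReal (‖fderiv ℝ v x‖ ^ 2 / √(‖fderiv ℝ v x‖ ^ 2 + ε k ^ 2))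
  have ε_lim : Tendsto ε atTop (𝓝 0) := tendsto_one_div_add_atTop_nhds_zero_nat
  have f_lim (x) : Tendsto (f · x) atTop (𝓝 ‖fderiv ℝ v x‖ₑ) := by
    rw [← ofReal_norm]
    rcases eq_or_ne (fderiv ℝ v x) 0 with h | h
    · simp [f, h]
    have : ‖fderiv ℝ v x‖ ^ 2 / √(‖fderiv ℝ v x‖ ^ 2 + 0 ^ 2) = ‖fderiv ℝ v x‖ := by
      field_simp
      simp
    rw [← this]
    refine ENNReal.tendsto_ofReal (tendsto_const_nhds.div ?_ (by simpa using h))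
    exact ((ε_lim.pow 2).const_add _).sqrt
  calc ∫⁻ x, ‖fderiv ℝ v x‖ₑ = ∫⁻ x, liminf (f · x) atTop :=
        lintegral_congr fun x => (f_lim x).liminf_eq.symm
    _ ≤ liminf (fun k => ∫⁻ x, f k x) atTop := lintegral_liminf_le fun k => by fun_prop
    _ ≤ eVariation v := by
        refine liminf_le_of_le (by isBoundedDefault) fun b hb => ?_
        obtain ⟨k, hk⟩ := hb.exists
        exact hk.trans (lintegral_sq_norm_fderiv_div_sqrt_le_eVariation hv hv_supp (by positivity))

lemma integral_comp_sub_mul_diverg (w : EuclideanSpace ℝ (Fin n) → ℝ)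
    (φ : EuclideanSpace ℝ (Fin n) → EuclideanSpace ℝ (Fin n)) (t : EuclideanSpace ℝ (Fin n)) :
    ∫ x, w (x - t) * diverg φ x = ∫ x, w x * diverg (fun y => φ (y + t)) x := by
  rw [← integral_add_right_eq_self _ t]
  simp only [add_sub_cancel_right, diverg, fderiv_comp_add_right]

open scoped Convolution in
theorem eVariation_convolution_le {r : EuclideanSpace ℝ (Fin n) → ℝ} (hr : Integrable r)
    (hr₀ : ∀ x, 0 ≤ r x) (hr₁ : ∫ x, r x = 1) (hw : Integrable w) :
    eVariation (r ⋆[ContinuousLinearMap.lsmul ℝ ℝ, volume] w) ≤ eVariation w := by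
  by_cases hV : eVariation w = ∞
  · simp [hV]
  refine eVariation_le fun φ hφ hφ_supp hφ_le => ENNReal.ofReal_le_of_le_toReal ?_
  have hD := continuous_diverg hφ
  obtain ⟨B, hB⟩ := (hasCompactSupport_diverg hφ_supp).exists_bound_of_continuous hD
  have integrable_prod : Integrable (fun q : EuclideanSpace ℝ (Fin n) × EuclideanSpace ℝ (Fin n) =>
      r q.2 * w (q.1 - q.2) * diverg φ q.1) (volume.prod volume) :=
    (hr.convolution_integrand (ContinuousLinearMap.lsmul ℝ ℝ) hw).mul_bdd
      (hD.comp continuous_fst).aestronglyMeasurable (.of_forall fun q => hB q.1)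
  have translate_le (t) : ∫ x, w (x - t) * diverg φ x ≤ (eVariation w).toReal := by
    rw [integral_comp_sub_mul_diverg, ← ENNReal.ofReal_le_iff_le_toReal hV]
    exact ofReal_integral_mul_diverg_le (hφ.comp (by fun_prop))
      (hφ_supp.comp_homeomorph (Homeomorph.addRight t)) fun x => hφ_le _
  calc ∫ x, (r ⋆[ContinuousLinearMap.lsmul ℝ ℝ, volume] w) x * diverg φ x
      = ∫ x, ∫ t, r t * w (x - t) * diverg φ x := by
        simp only [convolution_def, ContinuousLinearMap.lsmul_apply, smul_eq_mul,
          integral_mul_const]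
    _ = ∫ t, ∫ x, r t * w (x - t) * diverg φ x := integral_integral_swap integrable_prod
    _ ≤ ∫ t, r t * (eVariation w).toReal := by
        refine integral_mono integrable_prod.integral_prod_right (hr.mul_const _) fun t => ?_
        simp only [mul_assoc, integral_const_mul]
        exact mul_le_mul_of_nonneg_left (translate_le t) (hr₀ t)
    _ = (eVariation w).toReal := by rw [integral_mul_const, hr₁, one_mul]

theorem eVariation_le_liminf {f : EuclideanSpace ℝ (Fin n) → ℝ}
    {F : ℕ → EuclideanSpace ℝ (Fin n) → ℝ} (hf : LocallyIntegrable f)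
    (hF : ∀ k, LocallyIntegrable (F k))
    (h_lim : ∀ K : Set (EuclideanSpace ℝ (Fin n)), IsCompact K →
      Tendsto (fun k => ∫⁻ x in K, ‖F k x - f x‖ₑ) atTop (𝓝 0)) :
    eVariation f ≤ liminf (fun k => eVariation (F k)) atTop := by
  refine eVariation_le fun φ hφ hφ_supp hφ_le => ?_
  have hD := continuous_diverg hφ
  have hD_supp := hasCompactSupport_diverg hφ_supp
  obtain ⟨B, hB⟩ := hD_supp.exists_bound_of_continuous hD
  have integrable_mul {g : EuclideanSpace ℝ (Fin n) → ℝ} (hg : LocallyIntegrable g) :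
      Integrable fun x => g x * diverg φ x := by
    simpa only [smul_eq_mul] using hg.integrable_smul_right_of_hasCompactSupport hD hD_supp
  have enorm_le (k) : ∫⁻ x, ‖F k x * diverg φ x - f x * diverg φ x‖ₑ
      ≤ ∫⁻ x in tsupport (diverg φ), ‖F k x - f x‖ₑ * ENNReal.ofReal B := by
    rw [← lintegral_indicator (isClosed_tsupport _).measurableSet]
    refine lintegral_mono fun x => ?_
    by_cases hx : x ∈ tsupport (diverg φ)
    · rw [indicator_of_mem hx, ← sub_mul, enorm_mul]
      gcongr
      exact (ofReal_norm (diverg φ x)).symm.trans_le (ENNReal.ofReal_le_ofReal (hB x))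
    · simp [image_eq_zero_of_notMem_tsupport hx]
  have integral_lim : Tendsto (fun k => ∫ x, F k x * diverg φ x) atTop
      (𝓝 (∫ x, f x * diverg φ x)) := by
    refine tendsto_integral_of_L1 _ (integrable_mul hf).aestronglyMeasurable
      (.of_forall fun k => integrable_mul (hF k)) ?_
    refine tendsto_of_tendsto_of_tendsto_of_le_of_le tendsto_const_nhds ?_ (fun _ => zero_le)
      enorm_le
    simp only [lintegral_mul_const' _ _ ENNReal.ofReal_ne_top]
    simpa using ENNReal.Tendsto.mul_const (h_lim _ hD_supp) (.inr ENNReal.ofReal_ne_top)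
  rw [← (ENNReal.tendsto_ofReal integral_lim).liminf_eq]
  exact liminf_le_liminf (.of_forall fun k => ofReal_integral_mul_diverg_le hφ hφ_supp hφ_le)

section Truncation

/-- A smooth approximation, with parameter `ε`, of the truncation `t ↦ max (t - c) 0`, shifted so
as to vanish at `0`. -/
def smoothTruncation (c ε t : ℝ) : ℝ :=
  (√((t - c) ^ 2 + ε ^ 2) + (t - c)) / 2 - (√(c ^ 2 + ε ^ 2) - c) / 2

variable {c ε : ℝ}

lemma smoothTruncation_zero (c ε : ℝ) : smoothTruncation c ε 0 = 0 := by
  simp only [smoothTruncation, zero_sub, neg_sq]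
  ring

lemma contDiff_smoothTruncation (c : ℝ) (hε : 0 < ε) : ContDiff ℝ 1 (smoothTruncation c ε) := by
  have : ContDiff ℝ 1 fun t : ℝ => √((t - c) ^ 2 + ε ^ 2) :=
    ContDiff.sqrt (by fun_prop) fun t => by positivity
  unfold smoothTruncation
  fun_prop

lemma abs_le_sqrt_sq_add_sq (a ε : ℝ) : |a| ≤ √(a ^ 2 + ε ^ 2) :=
  Real.abs_le_sqrt (le_add_of_nonneg_right (sq_nonneg ε))

lemma sqrt_sq_add_sq_le (a : ℝ) (hε : 0 ≤ ε) : √(a ^ 2 + ε ^ 2) ≤ |a| + ε :=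
  Real.sqrt_le_iff.2 ⟨by positivity, by nlinarith [abs_nonneg a, sq_abs a]⟩

lemma deriv_smoothTruncation_mem_Icc (c t : ℝ) (hε : 0 < ε) :
    deriv (smoothTruncation c ε) t ∈ Icc (0 : ℝ) 1 := by
  have hasDerivAt_sub : HasDerivAt (fun t : ℝ => t - c) 1 t := (hasDerivAt_id t).sub_const c
  have hasDerivAt_sqrt := ((hasDerivAt_sub.fun_pow 2).add_const (ε ^ 2)).sqrt (by positivity)
  have h_deriv := ((hasDerivAt_sqrt.add hasDerivAt_sub).div_const 2).sub_const
    ((√(c ^ 2 + ε ^ 2) - c) / 2)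
  have s_pos : 0 < √((t - c) ^ 2 + ε ^ 2) := by positivity
  have deriv_eq : deriv (smoothTruncation c ε) t
      = ((t - c) / √((t - c) ^ 2 + ε ^ 2) + 1) / 2 := by
    refine h_deriv.deriv.trans ?_
    simp only [Nat.cast_ofNat, Nat.add_one_sub_one, pow_one, mul_one, ne_eq, OfNat.ofNat_ne_zero,
      not_false_eq_true, div_left_inj', add_left_inj]
    field_simp
  have abs_le_one : |(t - c) / √((t - c) ^ 2 + ε ^ 2)| ≤ 1 := by
    rw [abs_div, abs_of_pos s_pos, div_le_one s_pos]
    exact abs_le_sqrt_sq_add_sq _ _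
  rw [deriv_eq]
  constructor <;> linarith [abs_le.1 abs_le_one]

lemma abs_smoothTruncation_sub_max_le (hc : 0 ≤ c) (hε : 0 ≤ ε) (t : ℝ) :
    |smoothTruncation c ε t - max (t - c) 0| ≤ ε := by
  have max_eq : max (t - c) 0 = (|t - c| + (t - c)) / 2 := by
    rcases le_total 0 (t - c) with h | h
    · rw [abs_of_nonneg h, max_eq_left h, add_self_div_two]
    · rw [abs_of_nonpos h, max_eq_right h, neg_add_cancel, zero_div]
  rw [smoothTruncation, max_eq, abs_le]
  constructor <;> linarith [abs_le_sqrt_sq_add_sq (t - c) ε, sqrt_sq_add_sq_le (t - c) hε,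
    abs_le_sqrt_sq_add_sq c ε, sqrt_sq_add_sq_le c hε, abs_of_nonneg hc]

lemma abs_smoothTruncation_sub_max_le_add (hc : 0 ≤ c) (hε : 0 ≤ ε) (s t : ℝ) :
    |smoothTruncation c ε s - max (t - c) 0| ≤ ε + |s - t| :=
  calc |smoothTruncation c ε s - max (t - c) 0|
      ≤ |smoothTruncation c ε s - max (s - c) 0| + |max (s - c) 0 - max (t - c) 0| :=
        abs_sub_le _ _ _
    _ ≤ ε + |s - t| := by
        refine add_le_add (abs_smoothTruncation_sub_max_le hc hε s) ?_
        exact (abs_max_sub_max_le_abs _ _ _).trans_eq (by rw [sub_sub_sub_cancel_right])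

lemma tendsto_smoothTruncation (hc : 0 ≤ c) {ε s : ℕ → ℝ} {t : ℝ} (hε : ∀ k, 0 ≤ ε k)
    (hε_lim : Tendsto ε atTop (𝓝 0)) (hs : Tendsto s atTop (𝓝 t)) :
    Tendsto (fun k => smoothTruncation c (ε k) (s k)) atTop (𝓝 (max (t - c) 0)) := by
  refine tendsto_iff_dist_tendsto_zero.2 (squeeze_zero (fun _ => dist_nonneg)
    (fun k => abs_smoothTruncation_sub_max_le_add hc (hε k) (s k) t) ?_)
  simpa only [Real.dist_eq, add_zero] using hε_lim.add (tendsto_iff_dist_tendsto_zero.1 hs)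

lemma tendsto_lintegral_enorm_smoothTruncation_sub {α : Type*} [MeasurableSpace α] {μ : Measure α}
    [IsFiniteMeasure μ] {f : α → ℝ} {F : ℕ → α → ℝ} (hc : 0 ≤ c) {ε : ℕ → ℝ}
    (hε : ∀ k, 0 ≤ ε k) (hε_lim : Tendsto ε atTop (𝓝 0))
    (h_lim : Tendsto (fun k => ∫⁻ x, ‖F k x - f x‖ₑ ∂μ) atTop (𝓝 0)) :
    Tendsto (fun k => ∫⁻ x, ‖smoothTruncation c (ε k) (F k x) - max (f x - c) 0‖ₑ ∂μ) atTop
      (𝓝 0) := by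
  have enorm_le (k x) : ‖smoothTruncation c (ε k) (F k x) - max (f x - c) 0‖ₑ
      ≤ ENNReal.ofReal (ε k) + ‖F k x - f x‖ₑ := by
    rw [← ofReal_norm (F k x - f x), ← ENNReal.ofReal_add (hε k) (norm_nonneg _), ← ofReal_norm]
    exact ENNReal.ofReal_le_ofReal (abs_smoothTruncation_sub_max_le_add hc (hε k) _ _)
  refine tendsto_of_tendsto_of_tendsto_of_le_of_le tendsto_const_nhds ?_ (fun _ => zero_le)
    fun k => lintegral_mono (enorm_le k)
  simp only [lintegral_add_left measurable_const, lintegral_const]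
  simpa using (ENNReal.Tendsto.mul_const (ENNReal.tendsto_ofReal hε_lim)
    (.inr (measure_ne_top μ univ))).add h_lim

lemma integrable_max_sub_zero {α : Type*} [MeasurableSpace α] {μ : Measure α} {f : α → ℝ}
    (hc : 0 ≤ c) (hf : Integrable f μ) : Integrable (fun x => max (f x - c) 0) μ := by
  refine hf.mono ((hf.aestronglyMeasurable.sub aestronglyMeasurable_const).sup
    aestronglyMeasurable_const) (.of_forall fun x => ?_)
  rw [Real.norm_of_nonneg (le_max_right _ _), Real.norm_eq_abs]
  exact max_le (by linarith [le_abs_self (f x)]) (abs_nonneg _)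

lemma lt_sub_max_sub_zero_iff {s t : ℝ} (hs : s < c) : s < t - max (t - c) 0 ↔ s < t := by
  rcases max_cases (t - c) 0 with ⟨h, _⟩ | ⟨h, _⟩ <;> rw [h] <;> constructor <;> intro <;> linarith

end Truncation

theorem tendsto_lintegral_enorm_sub_of_tendsto_integral {α : Type*} [MeasurableSpace α]
    {μ : Measure α} {f : α → ℝ} {F : ℕ → α → ℝ} (hF : ∀ k, Integrable (F k) μ)
    (hf : Integrable f μ) (hF₀ : ∀ k x, 0 ≤ F k x) (hf₀ : ∀ x, 0 ≤ f x)
    (h_lim : ∀ᵐ x ∂μ, Tendsto (F · x) atTop (𝓝 (f x)))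
    (h_integral : Tendsto (fun k => ∫ x, F k x ∂μ) atTop (𝓝 (∫ x, f x ∂μ))) :
    Tendsto (fun k => ∫⁻ x, ‖F k x - f x‖ₑ ∂μ) atTop (𝓝 0) := by
  have integral_min : Tendsto (fun k => ∫ x, min (F k x) (f x) ∂μ) atTop (𝓝 (∫ x, f x ∂μ)) := by
    refine tendsto_integral_of_dominated_convergence f
      (fun k => ((hF k).inf hf).aestronglyMeasurable) hf (fun k => .of_forall fun x => ?_)
      (h_lim.mono fun x hx => by simpa using hx.min (tendsto_const_nhds (x := f x)))
    rw [Real.norm_of_nonneg (le_min (hF₀ k x) (hf₀ x))]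
    exact min_le_right _ _
  have integral_norm (k) : ∫ x, ‖F k x - f x‖ ∂μ
      = ∫ x, F k x ∂μ + ∫ x, f x ∂μ - 2 * ∫ x, min (F k x) (f x) ∂μ := by
    rw [← integral_const_mul, ← integral_add (hF k) hf]
    refine Eq.trans ?_ (integral_sub ((hF k).add hf) (((hF k).inf hf).const_mul 2))
    congr! 2 with x
    rw [Real.norm_eq_abs, min_def]
    split_ifs with h
    · rw [abs_of_nonpos (by linarith)]; ring
    · rw [abs_of_nonneg (by linarith)]; ring
  have norm_lim : Tendsto (fun k => ∫ x, ‖F k x - f x‖ ∂μ) atTop (𝓝 0) := by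
    simp only [integral_norm]
    convert (h_integral.add_const (∫ x, f x ∂μ)).sub (integral_min.const_mul 2) using 2
    ring
  refine (ENNReal.ofReal_zero ▸ ENNReal.tendsto_ofReal norm_lim).congr fun k => ?_
  exact ofReal_integral_norm_eq_lintegral_enorm ((hF k).sub hf)

lemma ennreal_liminf_add_liminf_le (a b : ℕ → ℝ≥0∞) :
    liminf a atTop + liminf b atTop ≤ liminf (fun k => a k + b k) atTop := by
  simp only [liminf_eq_iSup_iInf_of_nat]
  rw [ENNReal.iSup_add_iSup_of_monotone]
  · exact iSup_mono fun i => le_iInf₂ fun k hk => add_le_add (iInf₂_le k hk) (iInf₂_le k hk)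
  all_goals exact fun i j hij => biInf_mono fun k hk => hij.trans hk

open scoped Convolution in
theorem exists_contDiff_tendsto_of_hasCompactSupport (hw : Integrable w)
    (hw_supp : HasCompactSupport w) (hw₀ : ∀ x, 0 ≤ w x) :
    ∃ W : ℕ → EuclideanSpace ℝ (Fin n) → ℝ,
      (∀ k, ContDiff ℝ 2 (W k) ∧ HasCompactSupport (W k) ∧ (∀ x, 0 ≤ W k x) ∧
        eVariation (W k) ≤ eVariation w) ∧
      (∀ᵐ x, Tendsto (W · x) atTop (𝓝 (w x))) ∧
      Tendsto (fun k => ∫⁻ x, ‖W k x - w x‖ₑ) atTop (𝓝 0) := by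
  set ρ : ℕ → ContDiffBump (0 : EuclideanSpace ℝ (Fin n)) := fun k =>
    ⟨1 / ((k : ℝ) + 1), 2 * (1 / ((k : ℝ) + 1)), by positivity,
      lt_mul_of_one_lt_left (by positivity) one_lt_two⟩
  set W : ℕ → EuclideanSpace ℝ (Fin n) → ℝ := fun k =>
    (ρ k).normed volume ⋆[ContinuousLinearMap.lsmul ℝ ℝ, volume] w
  have W_contDiff (k) : ContDiff ℝ 2 (W k) :=
    (ρ k).hasCompactSupport_normed.contDiff_convolution_left (n := 2) _ (ρ k).contDiff_normed
      hw.locallyIntegrable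
  have W_supp (k) : HasCompactSupport (W k) := (ρ k).hasCompactSupport_normed.convolution _ hw_supp
  have W_nonneg (k x) : 0 ≤ W k x :=
    integral_nonneg fun y => mul_nonneg ((ρ k).nonneg_normed y) (hw₀ _)
  have W_lim : ∀ᵐ x, Tendsto (W · x) atTop (𝓝 (w x)) := by
    refine ContDiffBump.ae_convolution_tendsto_right_of_locallyIntegrable (K := 2) ?_
      (.of_forall fun k => le_rfl) hw.locallyIntegrable
    simpa only [mul_zero] using tendsto_one_div_add_atTop_nhds_zero_nat.const_mul (2 : ℝ)
  have integral_W (k) : ∫ x, W k x = ∫ x, w x := by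
    rw [integral_convolution _ (ρ k).integrable_normed hw, (ρ k).integral_normed,
      ContinuousLinearMap.lsmul_apply, one_smul]
  refine ⟨W, fun k => ⟨W_contDiff k, W_supp k, W_nonneg k, ?_⟩, W_lim, ?_⟩
  · exact eVariation_convolution_le (ρ k).integrable_normed (ρ k).nonneg_normed
      (ρ k).integral_normed hw
  · refine tendsto_lintegral_enorm_sub_of_tendsto_integral (fun k => ?_) hw W_nonneg hw₀ W_lim ?_
    · exact (W_contDiff k).continuous.integrable_of_hasCompactSupport (W_supp k)
    · simp only [integral_W, tendsto_const_nhds]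

lemma eVariation_smoothTruncation_comp_add_lintegral_ballPerimeter_le (hn : 1 < n)
    (hv : ContDiff ℝ 2 v) (hv_supp : HasCompactSupport v) (hv₀ : ∀ x, 0 ≤ v x) (c : ℝ) {ε : ℝ}
    (hε : 0 < ε) :
    eVariation (smoothTruncation c ε ∘ v)
      + ∫⁻ ξ in Ioi 0, ballPerimeter (volume : Measure (EuclideanSpace ℝ (Fin n)))
          (volume {x | ξ < v x - smoothTruncation c ε (v x)}) ≤ eVariation v := by
  have hv' : ContDiff ℝ 1 v := hv.of_le one_le_two
  have hF := contDiff_smoothTruncation c hε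
  refine le_trans ?_ (lintegral_fderiv_le_eVariation hv hv_supp)
  refine le_trans (add_le_add_left (eVariation_le_lintegral_fderiv (hF.comp hv')) _) ?_
  exact (prekopaLeindler_volume_euclideanSpace n)
    |>.lintegral_fderiv_comp_add_lintegral_ballPerimeter_le (by simpa using hn) hv' hv_supp hv₀
      hF (smoothTruncation_zero c ε) fun t => deriv_smoothTruncation_mem_Icc c t hε

theorem eVariation_max_sub_add_lintegral_ballPerimeter_le (hn : 1 < n) (hw : Integrable w)
    (hw_supp : HasCompactSupport w) (hw₀ : ∀ x, 0 ≤ w x) {c : ℝ} (hc : 0 ≤ c) :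
    eVariation (fun x => max (w x - c) 0)
      + ∫⁻ ξ in Ioo 0 c, ballPerimeter (volume : Measure (EuclideanSpace ℝ (Fin n)))
          (volume {x | ξ < w x}) ≤ eVariation w := by
  obtain ⟨W, hW, W_lim, W_lim_L1⟩ := exists_contDiff_tendsto_of_hasCompactSupport hw hw_supp hw₀
  set ε : ℕ → ℝ := fun k => 1 / ((k : ℝ) + 1)
  have ε_pos (k) : 0 < ε k := by positivity
  have ε_lim : Tendsto ε atTop (𝓝 0) := tendsto_one_div_add_atTop_nhds_zero_nat
  set F : ℕ → EuclideanSpace ℝ (Fin n) → ℝ := fun k => smoothTruncation c (ε k) ∘ W k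
  have W_cont (k) : Continuous (W k) := (hW k).1.continuous
  have F_cont (k) : Continuous (F k) :=
    (contDiff_smoothTruncation c (ε_pos k)).continuous.comp (W_cont k)
  set a : ℕ → ℝ≥0∞ := fun k => eVariation (F k)
  set b : ℕ → ℝ≥0∞ := fun k => ∫⁻ ξ in Ioo 0 c,
    ballPerimeter (volume : Measure (EuclideanSpace ℝ (Fin n))) (volume {x | ξ < W k x - F k x})
  have add_le (k) : a k + b k ≤ eVariation w := by
    obtain ⟨W_contDiff, W_supp, W_nonneg, W_le⟩ := hW k
    refine le_trans (add_le_add_right (lintegral_mono_set Ioo_subset_Ioi_self) _) (le_trans ?_ W_le)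
    exact eVariation_smoothTruncation_comp_add_lintegral_ballPerimeter_le hn W_contDiff W_supp
      W_nonneg c (ε_pos k)
  have le_liminf_a : eVariation (fun x => max (w x - c) 0) ≤ liminf a atTop := by
    refine eVariation_le_liminf (integrable_max_sub_zero hc hw).locallyIntegrable
      (fun k => (F_cont k).locallyIntegrable) fun K hK => ?_
    have := isFiniteMeasure_restrict.2 (hK.measure_ne_top (μ := volume))
    exact tendsto_lintegral_enorm_smoothTruncation_sub hc (fun k => (ε_pos k).le) ε_lim
      (tendsto_of_tendsto_of_tendsto_of_le_of_le tendsto_const_nhds W_lim_L1 (fun _ => zero_le)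
        fun k => setLIntegral_le_lintegral K _)
  have le_liminf_b : ∫⁻ ξ in Ioo 0 c, ballPerimeter
      (volume : Measure (EuclideanSpace ℝ (Fin n))) (volume {x | ξ < w x}) ≤ liminf b atTop := by
    refine le_of_eq_of_le (setLIntegral_congr_fun measurableSet_Ioo fun ξ hξ => ?_)
      (lintegral_ballPerimeter_le_liminf volume (f := fun x => w x - max (w x - c) 0)
        (fun k => ((W_cont k).sub (F_cont k)).measurable) (W_lim.mono fun x hx =>
          hx.sub (tendsto_smoothTruncation hc (fun k => (ε_pos k).le) ε_lim hx)) _)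
    simp only [lt_sub_max_sub_zero_iff hξ.2]
  calc _ ≤ liminf a atTop + liminf b atTop := add_le_add le_liminf_a le_liminf_b
    _ ≤ liminf (fun k => a k + b k) atTop := ennreal_liminf_add_liminf_le a b
    _ ≤ eVariation w := liminf_le_of_le (by isBoundedDefault) fun p hp =>
      let ⟨k, hk⟩ := hp.exists; hk.trans (add_le k)

theorem eVariation_max_sub_add_lintegral_Ioo_ballPerimeter_le (hn : 1 < n) (hw : Integrable w)
    (hw_supp : HasCompactSupport w) {s t : ℝ} (hs : 0 ≤ s) (hst : s ≤ t) :
    eVariation (fun x => max (w x - t) 0)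
      + ∫⁻ ξ in Ioo s t, ballPerimeter (volume : Measure (EuclideanSpace ℝ (Fin n)))
          (volume {x | ξ < w x}) ≤ eVariation (fun x => max (w x - s) 0) := by
  have supp : HasCompactSupport fun x => max (w x - s) 0 :=
    hw_supp.comp_left (g := fun y => max (y - s) 0) (by simpa using hs)
  have truncate (x) : max (max (w x - s) 0 - (t - s)) 0 = max (w x - t) 0 := by
    rw [← max_sub_sub_right, sub_sub_sub_cancel_right, max_assoc,
      max_eq_right (a := 0 - (t - s)) (by linarith)]
  have shift : ∫⁻ ξ in Ioo s t, ballPerimeter (volume : Measure (EuclideanSpace ℝ (Fin n)))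
        (volume {x | ξ < w x})
      = ∫⁻ ξ in Ioo 0 (t - s), ballPerimeter (volume : Measure (EuclideanSpace ℝ (Fin n)))
        (volume {x | ξ < max (w x - s) 0}) := by
    rw [← (measurePreserving_add_right volume s).setLIntegral_comp_preimage_emb
      (measurableEmbedding_addRight s), preimage_add_const_Ioo, sub_self]
    refine setLIntegral_congr_fun measurableSet_Ioo fun ξ hξ => ?_
    simp only [lt_max_iff, lt_sub_iff_add_lt, hξ.1.not_gt, or_false]
  have := eVariation_max_sub_add_lintegral_ballPerimeter_le hn (integrable_max_sub_zero hs hw) supp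
    (fun x => le_max_right _ _) (sub_nonneg.2 hst)
  simpa only [truncate, shift] using this

end Variation

section MeasuresOnReal

theorem measure_le_of_Ioc_le {μ ν : Measure ℝ} (hν : ∀ x, ν (Iic x) ≠ ∞)
    (h : ∀ a b, μ (Ioc a b) ≤ ν (Ioc a b)) : μ ≤ ν := by
  have cdf_continuous (x : ℝ) :
      ContinuousWithinAt (fun x => (ν (Iic x)).toReal) (Ioi x) x := by
    have := tendsto_measure_biInter_gt (μ := ν) (s := Iic) (a := x)
      (fun r _ => measurableSet_Iic.nullMeasurableSet) (fun i j _ hij => Iic_subset_Iic.2 hij)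
      ⟨x + 1, lt_add_one x, hν _⟩
    have biInter_Iic : ⋂ r > x, Iic r = Iic x := by
      ext y
      simpa using forall_gt_imp_ge_iff_le_of_dense
    rw [biInter_Iic] at this
    exact (ENNReal.tendsto_toReal (hν x)).comp this
  let F : StieltjesFunction ℝ :=
    ⟨fun x => (ν (Iic x)).toReal, fun x y hxy => ENNReal.toReal_mono (hν y)
      (measure_mono (Iic_subset_Iic.2 hxy)), fun x => continuousWithinAt_Ioi_iff_Ici.1
        (cdf_continuous x)⟩
  have F_measure : F.measure = ν := by
    refine Measure.ext_of_Ioc _ _ fun a b hab => ?_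
    rw [F.measure_Ioc, ENNReal.ofReal_sub _ ENNReal.toReal_nonneg, ENNReal.ofReal_toReal (hν b),
      ENNReal.ofReal_toReal (hν a), ← measure_sdiff (Iic_subset_Iic.2 hab.le)
        measurableSet_Iic.nullMeasurableSet (hν a), Iic_sdiff_Iic]
  have le_outer : μ.toOuterMeasure ≤ F.outer := by
    refine OuterMeasure.le_ofFunction.2 fun s => ?_
    rw [F.length_eq]
    refine le_iInf fun a => le_iInf fun b => le_iInf fun hs => ?_
    have s_subset : s ⊆ Ioc a b := fun x hx => hs ⟨hx, notMem_botSet_of_lt (sub_one_lt x)⟩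
    rw [← F.measure_Ioc, F_measure]
    exact (measure_mono s_subset).trans (h a b)
  refine Measure.le_iff'.2 fun s => (le_outer s).trans_eq ?_
  rw [← F_measure, StieltjesFunction.measure]
  rfl

lemma measure_le_of_subset_Ici {μ ν : Measure ℝ} {c : ℝ} (hμ : μ {c} = 0)
    (hν : ∀ x, ν (Ioc c x) ≠ ∞) (h : ∀ a b, c ≤ a → a ≤ b → μ (Ioc a b) ≤ ν (Ioc a b)) {A : Set ℝ}
    (hA : A ⊆ Ici c) : μ A ≤ ν A := by
  have restrict_le : μ.restrict (Ioi c) ≤ ν.restrict (Ioi c) := by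
    refine measure_le_of_Ioc_le (fun x => ?_) fun a b => ?_
    · rw [Measure.restrict_apply measurableSet_Iic, inter_comm, Ioi_inter_Iic]
      exact hν x
    · simp only [Measure.restrict_apply measurableSet_Ioc, Ioc_inter_Ioi]
      rcases le_total (a ⊔ c) b with hab | hab
      · exact h _ _ le_sup_right hab
      · simp [hab]
  have A_subset : A ⊆ A ∩ Ioi c ∪ {c} := fun x hx =>
    (hA hx).eq_or_lt.elim (fun h => .inr h.symm) fun h => .inl ⟨hx, h⟩
  calc μ A ≤ μ (A ∩ Ioi c) + μ {c} := (measure_mono A_subset).trans (measure_union_le _ _)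
    _ = μ.restrict (Ioi c) A := by rw [hμ, add_zero, Measure.restrict_apply' measurableSet_Ioi]
    _ ≤ ν.restrict (Ioi c) A := restrict_le A
    _ ≤ ν A := Measure.restrict_apply_le _ _

end MeasuresOnReal

section TailIntegral

variable {f : ℝ → ℝ} {a b : ℝ}

lemma integral_Ioi_le_integral_Ioi (hf₀ : ∀ x, 0 ≤ f x) (hab : a ≤ b)
    (hf : IntegrableOn f (Ioc a b)) : ∫ x in Ioi b, f x ≤ ∫ x in Ioi a, f x := by
  by_cases hb : IntegrableOn f (Ioi b)
  · refine setIntegral_mono_set ?_ (.of_forall hf₀) (Ioi_subset_Ioi hab).eventuallyLE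
    rw [← Ioc_union_Ioi_eq_Ioi hab]
    exact hf.union hb
  · rw [integral_undef hb]
    exact integral_nonneg hf₀

lemma ofReal_integral_Ioi_sub_le (hf₀ : ∀ x, 0 ≤ f x) (hab : a ≤ b) :
    ENNReal.ofReal ((∫ x in Ioi a, f x) - ∫ x in Ioi b, f x)
      ≤ ∫⁻ x in Ioc a b, ENNReal.ofReal (f x) := by
  by_cases ha : IntegrableOn f (Ioi a)
  · rw [intervalIntegral.integral_Ioi_sub_Ioi ha hab, intervalIntegral.integral_of_le hab,
      ofReal_integral_eq_lintegral_ofReal (ha.mono_set Ioc_subset_Ioi_self) (.of_forall hf₀)]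
  · rw [integral_undef ha, zero_sub,
      ENNReal.ofReal_of_nonpos (neg_nonpos.2 (integral_nonneg hf₀))]
    exact zero_le

end TailIntegral

section BallPerimeterTail

variable {n : ℕ} {u : EuclideanSpace ℝ (Fin n) → ℝ}

/-- The function `H` of the theorem: `∫_τ^∞` of the perimeter of the ball that has the same measure
as the superlevel set `{u > ξ}`. -/
def ballPerimeterTail (u : EuclideanSpace ℝ (Fin n) → ℝ) (τ : ℝ) : ℝ :=
  ∫ ξ in Ioi τ, (ballPerimeter (volume : Measure (EuclideanSpace ℝ (Fin n)))
    (volume {x | ξ < u x})).toReal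

lemma toReal_ballPerimeter (m : ℝ≥0∞) :
    (ballPerimeter (volume : Measure (EuclideanSpace ℝ (Fin n))) m).toReal
      = n * omegaN n ^ ((1 : ℝ) / n) * m.toReal ^ (1 - (1 : ℝ) / n) := by
  simp only [ballPerimeter, finrank_euclideanSpace, Fintype.card_fin, omegaN, ENNReal.toReal_mul,
    ENNReal.toReal_rpow, ENNReal.toReal_natCast, one_div]

lemma eVariation_max_sub_ne_top (hn : 1 < n) (hu : IsBV u) (hu_supp : HasCompactSupport u)
    (hu₀ : ∀ x, 0 ≤ u x) {s : ℝ} (hs : 0 ≤ s) : eVariation (fun x => max (u x - s) 0) ≠ ∞ := by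
  have := eVariation_max_sub_add_lintegral_ballPerimeter_le hn hu.1 hu_supp hu₀ hs
  exact ne_top_of_le_ne_top (ofReal_totalVar hu.2 ▸ ENNReal.ofReal_ne_top) (le_self_add.trans this)

lemma lintegral_Ioc_ballPerimeter_ne_top (hn : 1 < n) (hu : IsBV u) (hu_supp : HasCompactSupport u)
    (hu₀ : ∀ x, 0 ≤ u x) {s t : ℝ} (hs : 0 ≤ s) (hst : s ≤ t) :
    ∫⁻ ξ in Ioc s t, ballPerimeter (volume : Measure (EuclideanSpace ℝ (Fin n)))
      (volume {x | ξ < u x}) ≠ ∞ := by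
  rw [← restrict_Ioo_eq_restrict_Ioc]
  have := eVariation_max_sub_add_lintegral_Ioo_ballPerimeter_le hn hu.1 hu_supp hs hst
  exact ne_top_of_le_ne_top (eVariation_max_sub_ne_top hn hu hu_supp hu₀ hs)
    (le_add_self.trans this)

lemma ballPerimeterTail_le (hn : 1 < n) (hu : IsBV u) (hu_supp : HasCompactSupport u)
    (hu₀ : ∀ x, 0 ≤ u x) {s t : ℝ} (hs : 0 ≤ s) (hst : s ≤ t) :
    ballPerimeterTail u t ≤ ballPerimeterTail u s :=
  integral_Ioi_le_integral_Ioi (fun _ => ENNReal.toReal_nonneg) hst <|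
    integrable_toReal_of_lintegral_ne_top
      (measurable_ballPerimeter_measure_lt volume volume u).aemeasurable
      (lintegral_Ioc_ballPerimeter_ne_top hn hu hu_supp hu₀ hs hst)

lemma eVariation_max_sub_add_ofReal_ballPerimeterTail_sub_le (hn : 1 < n) (hu : Integrable u)
    (hu_supp : HasCompactSupport u) {s t : ℝ} (hs : 0 ≤ s) (hst : s ≤ t) :
    eVariation (fun x => max (u x - t) 0)
        + ENNReal.ofReal (ballPerimeterTail u s - ballPerimeterTail u t)
      ≤ eVariation (fun x => max (u x - s) 0) := by
  refine le_trans (add_le_add_right ?_ _)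
    (eVariation_max_sub_add_lintegral_Ioo_ballPerimeter_le hn hu hu_supp hs hst)
  calc ENNReal.ofReal (ballPerimeterTail u s - ballPerimeterTail u t)
      ≤ ∫⁻ ξ in Ioc s t, ENNReal.ofReal (ballPerimeter
          (volume : Measure (EuclideanSpace ℝ (Fin n))) (volume {x | ξ < u x})).toReal :=
        ofReal_integral_Ioi_sub_le (fun _ => ENNReal.toReal_nonneg) hst
    _ ≤ ∫⁻ ξ in Ioc s t, ballPerimeter (volume : Measure (EuclideanSpace ℝ (Fin n)))
          (volume {x | ξ < u x}) := lintegral_mono fun _ => ENNReal.ofReal_toReal_le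
    _ = _ := by rw [restrict_Ioo_eq_restrict_Ioc]

-- The integrand is the constant `2`, which has no integral over a half-line.
lemma ballPerimeterTail_one (u : EuclideanSpace ℝ (Fin 1) → ℝ) (τ : ℝ) :
    ballPerimeterTail u τ = 0 := by
  simp [ballPerimeterTail, toReal_ballPerimeter, Measure.real]

theorem ofReal_ballPerimeterTail_sub_le_ofReal_totalVar_sub (hn : 0 < n) (hu : IsBV u)
    (hu_supp : HasCompactSupport u) (hu₀ : ∀ x, 0 ≤ u x) {s t : ℝ} (hs : 0 ≤ s) (ht : 0 ≤ t) :
    ENNReal.ofReal (ballPerimeterTail u s - ballPerimeterTail u t)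
      ≤ ENNReal.ofReal (totalVar fun x => max (u x - s) 0)
        - ENNReal.ofReal (totalVar fun x => max (u x - t) 0) := by
  obtain rfl | hn := (Nat.succ_le_of_lt hn).eq_or_lt
  · simp [ballPerimeterTail_one]
  obtain hts | hst := le_total t s
  · rw [ENNReal.ofReal_of_nonpos
      (sub_nonpos.2 (ballPerimeterTail_le hn hu hu_supp hu₀ ht hts))]
    exact zero_le
  have ofReal_totalVar_max_sub {c : ℝ} (hc : 0 ≤ c) :
      ENNReal.ofReal (totalVar fun x => max (u x - c) 0) = eVariation fun x => max (u x - c) 0 :=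
    ofReal_totalVar (bddAbove_varSet (eVariation_max_sub_ne_top hn hu hu_supp hu₀ hc))
  rw [ofReal_totalVar_max_sub hs, ofReal_totalVar_max_sub ht]
  exact ENNReal.le_sub_of_add_le_left (eVariation_max_sub_ne_top hn hu hu_supp hu₀ ht)
    (eVariation_max_sub_add_ofReal_ballPerimeterTail_sub_le hn hu.1 hu_supp hs hst)

end BallPerimeterTail

section DecreasingRearrangement

variable {α : Type*} [MeasurableSpace α] (μ : Measure α) (g : α → ℝ)

lemma decRearr_nonneg (s : ℝ) : 0 ≤ decRearr μ g s := Real.sInf_nonneg fun _ ht => ht.1.le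

lemma decRearr_of_nonpos {s : ℝ} (hs : s ≤ 0) : decRearr μ g s = decRearr μ g 0 := by
  simp only [decRearr, ENNReal.ofReal_of_nonpos hs, ENNReal.ofReal_zero]

end DecreasingRearrangement

theorem measure_comparison_sigma_ge_DHustar_general {n : ℕ} (hn : 0 < n)
    (u : EuclideanSpace ℝ (Fin n) → ℝ) (hu : IsBV u) (hu_supp : HasCompactSupport u)
    (hu_nonneg : ∀ x, 0 ≤ u x) (G : ℝ → ℝ)
    (hG : ∀ s, G s = totalVar (fun x => max (u x - decRearr volume u s) 0))
    (σ : Measure ℝ) (hσ : ∀ s, 0 ≤ s → σ (Ioc 0 s) = ENNReal.ofReal (G s)) (H : ℝ → ℝ)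
    (hH : ∀ τ, H τ = ∫ ξ in Ioi τ, (n : ℝ) * omegaN n ^ ((1 : ℝ) / n)
        * ((volume {x | ξ < u x}).toReal) ^ (1 - (1 : ℝ) / n))
    (ν : Measure ℝ) (hν : ∀ a b : ℝ, a ≤ b → ν (Ioc a b)
      = ENNReal.ofReal (H (decRearr volume u b) - H (decRearr volume u a)))
    {A : Set ℝ} (hA : A ⊆ Ici 0) : ν A ≤ σ A := by
  have H_eq : H = ballPerimeterTail u :=
    funext fun τ => by simp only [hH, ballPerimeterTail, toReal_ballPerimeter]
  have ν_zero : ν {0} = 0 := measure_mono_null (t := Ioc (-1) 0) (by simp) <| by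
    rw [hν _ _ (by norm_num), decRearr_of_nonpos _ _ (by norm_num : (-1 : ℝ) ≤ 0), sub_self,
      ENNReal.ofReal_zero]
  refine measure_le_of_subset_Ici ν_zero (fun x => ?_) (fun a b ha hab => ?_) hA
  · obtain hx | hx := le_total 0 x
    · exact hσ x hx ▸ ENNReal.ofReal_ne_top
    · simp [hx]
  calc ν (Ioc a b) ≤ σ (Ioc 0 b) - σ (Ioc 0 a) := by
        rw [hν a b hab, hσ a ha, hσ b (ha.trans hab), hG, hG, H_eq]
        exact ofReal_ballPerimeterTail_sub_le_ofReal_totalVar_sub hn hu hu_supp hu_nonneg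
          (decRearr_nonneg _ _ _) (decRearr_nonneg _ _ _)
    _ ≤ σ (Ioc 0 b \ Ioc 0 a) := le_measure_sdiff
    _ ≤ σ (Ioc a b) := measure_mono fun x hx => ⟨not_le.1 fun h => hx.2 ⟨hx.1.1, h⟩, hx.1.2⟩

theorem measure_comparison_sigma_ge_DHustar {n : ℕ} (hn : 0 < n)
    (Ω : Set (EuclideanSpace ℝ (Fin n))) (hΩo : IsOpen Ω)
    (hΩb : Bornology.IsBounded Ω) (hΩp : HasFinPerim Ω)
    (u : EuclideanSpace ℝ (Fin n) → ℝ) (hu : IsBV u)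
    (hu_nonneg : ∀ x, 0 ≤ u x) (hu_zero : ∀ x ∉ Ω, u x = 0)
    -- `G s = |D (u - u*(s))₊|(ℝⁿ)`
    (G : ℝ → ℝ)
    (hG : ∀ s, G s = totalVar (fun x => max (u x - decRearr volume u s) 0))
    -- `σ` is the positive measure with `G s = σ((0,s])`
    (σ : Measure ℝ) (hσ : ∀ s, 0 ≤ s → σ (Set.Ioc 0 s) = ENNReal.ofReal (G s))
    -- `H τ = ∫_τ^∞ n ωₙ^{1/n} μ(ξ)^{1-1/n} dξ`, `μ` the distribution function of `u`
    (H : ℝ → ℝ)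
    (hH : ∀ τ, H τ = ∫ ξ in Set.Ioi τ,
      (n : ℝ) * omegaN n ^ ((1 : ℝ) / n)
        * ((volume {x | ξ < u x}).toReal) ^ (1 - (1 : ℝ) / n))
    -- `ν = D[H(u*)]`, the (Stieltjes) derivative measure of the increasing function `H ∘ u*`
    (ν : Measure ℝ)
    (hν : ∀ a b : ℝ, a ≤ b → ν (Set.Ioc a b)
      = ENNReal.ofReal (H (decRearr volume u b) - H (decRearr volume u a))) :
    ∀ A : Set ℝ, MeasurableSet A → A ⊆ Set.Ici 0 → ν A ≤ σ A := fun _ _ hA =>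
  have hu_supp : HasCompactSupport u := .intro hΩb.isCompact_closure fun x hx =>
    hu_zero x fun h => hx (subset_closure h)
  measure_comparison_sigma_ge_DHustar_general hn u hu hu_supp hu_nonneg G hG σ hσ H hH ν hν hA
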